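/- arXiv:0810.2731 — 3 statements merged into one kernel-verified Lean document; each statement's English description precedes it below -/
import Mathlib

section
/- Fix integers ℓ≥1 and n≥0. For every triple (a,b,c) of nonnegative integers, the number of colored permutations σ ∈ G_{ℓ,n} with fmaf σ = a, exc σ = b and fix σ = c equals the number of σ ∈ G_{ℓ,n} with fmaj σ = a, exc σ = b and fix σ = c; that is, the triple statistics (fmaf, exc, fix) and (fmaj, exc, fix) are equidistributed on G_{ℓ,n}. -/
/-!
A colored permutation `σ` with `c` fixed points is the same thing as a pair `(δ, S)`: the set `S`
of its fixed points and its derangement part `δ`, a colored derangement. The color sum and the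
number of excedances depend on `δ` only, so it suffices to show, for each fixed `δ` of length `m`,
that `maf` and `maj` have the same distribution when `S` runs over the `c`-subsets of the `m + c`
positions.

View `σ` as a shuffle of the word `δ` with `c` zeros marking the fixed points. In a descent of `σ`
a fixed point behaves as a letter which is smaller than every excedant letter of `δ`, larger than
every other letter, and equal to the other fixed points (`CP.Inflates.des_iff`). Moreover, at two
consecutive positions of a derangement an excedant letter is always larger than a non-excedant
one (`CP.desB_of_exc`, `CP.desB_of_not_exc`). Under this compatibility the generating polynomial
of `maj` over all shuffles is `q ^ maj δ * [m + c choose c]_q` (`ShuffleMaj.sum_wmaj`). This is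
proved by induction on the length, separating the shuffles that end in a letter from those that
end in a zero and using both `q`-Pascal rules. By definition `maf` equals `maj δ` plus
`∑ i ∈ S, i - c.choose 2`, whose generating polynomial is also `[m + c choose c]_q`
(`ShuffleMaj.sum_sum_eq`). Comparing coefficients gives `ShuffleMaj.card_filter_eq`, and summing
over `δ` with `CP.card_filter_eq_sum` gives the theorem.
-/


open Finset

/-- A colored permutation in `G_{ℓ,n} ≅ C_ℓ ≀ S_n`: an underlying permutation of `Fin n`
together with a color (exponent of `ζ`) attached to each position. The letter at (0-based)
position `i` of the word of `σ` is `ζ^(σ.2 i) · (σ.1 i + 1)` (1-based value `σ.1 i + 1`). -/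
abbrev CP (ℓ n : ℕ) := Equiv.Perm (Fin n) × (Fin n → Fin ℓ)

namespace CP

variable {ℓ n : ℕ}

/-- `gtLetter a b` : the letter `a = (colorIndex, value)` is greater than `b` in the order
`1 > ζ > ⋯ > ζ^{ℓ-1}` on colors, colors compared first. -/
def gtLetter (a b : ℕ × ℕ) : Prop := a.1 < b.1 ∨ (a.1 = b.1 ∧ b.2 < a.2)

instance (a b : ℕ × ℕ) : Decidable (gtLetter a b) := by unfold gtLetter; infer_instance

/-- The letter (color index, 0-based absolute value) at 0-based position `i`. -/
def letter (σ : CP ℓ n) (i : ℕ) : ℕ × ℕ :=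
  if h : i < n then ((σ.2 ⟨i, h⟩ : ℕ), (σ.1 ⟨i, h⟩ : ℕ)) else (0, 0)

/-- 0-based descent positions : `i < n-1` such that `x_{i+1} > x_{i+2}` (1-based positions). -/
def desSet (σ : CP ℓ n) : Finset ℕ :=
  (range (n - 1)).filter fun i => gtLetter (letter σ i) (letter σ (i + 1))

/-- Major index: sum of the (1-based) descent places. -/
def maj (σ : CP ℓ n) : ℕ := ∑ i ∈ desSet σ, (i + 1)

/-- Number of descents. -/
def des (σ : CP ℓ n) : ℕ := (desSet σ).card

/-- `col σ = Σ_j j·#{i : ε_{x_i} = ζ^j}`. -/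
def col (σ : CP ℓ n) : ℕ := ∑ i, (σ.2 i : ℕ)

/-- flag major index. -/
def fmaj (σ : CP ℓ n) : ℕ := ℓ * maj σ + col σ

/-- The set of fixed points (position fixed and color `ζ^0 = 1`). -/
def fixSet (σ : CP ℓ n) : Finset (Fin n) :=
  univ.filter fun i => σ.1 i = i ∧ (σ.2 i : ℕ) = 0

def fix (σ : CP ℓ n) : ℕ := (fixSet σ).card

/-- Number of excedances `x_i > i`. -/
def exc (σ : CP ℓ n) : ℕ :=
  (univ.filter fun i : Fin n => (σ.2 i : ℕ) = 0 ∧ (i : ℕ) < (σ.1 i : ℕ)).card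

lemma card_nonfix (σ : CP ℓ n) : ((fixSet σ)ᶜ).card = n - fix σ := by
  rw [Finset.card_compl, fix, Fintype.card_fin]

lemma card_vals (σ : CP ℓ n) : (((fixSet σ)ᶜ).image σ.1).card = n - fix σ := by
  rw [Finset.card_image_of_injective _ σ.1.injective, card_nonfix]

/-- The bijection from nonfixed positions to the set of their values. -/
def derMid (σ : CP ℓ n) :
    {x // x ∈ ((fixSet σ)ᶜ : Finset (Fin n))} ≃ {x // x ∈ ((fixSet σ)ᶜ).image σ.1} where
  toFun p := ⟨σ.1 p.1, Finset.mem_image_of_mem _ p.2⟩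
  invFun v := ⟨σ.1.symm v.1, by
    obtain ⟨p, hp, hpv⟩ := Finset.mem_image.mp v.2
    simpa [← hpv] using hp⟩
  left_inv p := by simp
  right_inv v := by simp

/-- The derangement part `Der σ`: delete the fixed points of the word of `σ`, replace each
absolute value by its rank among the remaining values, and keep the colors. -/
def Der (σ : CP ℓ n) : CP ℓ (n - fix σ) :=
  let eP := ((fixSet σ)ᶜ).orderIsoOfFin (card_nonfix σ)
  let eV := (((fixSet σ)ᶜ).image σ.1).orderIsoOfFin (card_vals σ)
  (eP.toEquiv.trans ((derMid σ).trans eV.toEquiv.symm), fun i => σ.2 (eP i))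

/-- `maf σ = maj (Der σ) + Σ_{j=1}^k (i_j − j)` over the (1-based) fixed points
`i_1 < ⋯ < i_k`; with 0-based fixed positions this is `Σ f − k(k−1)/2`. -/
def maf (σ : CP ℓ n) : ℕ := maj (Der σ) + ((∑ i ∈ fixSet σ, (i : ℕ)) - (fix σ).choose 2)

/-- flag maf. -/
def fmaf (σ : CP ℓ n) : ℕ := ℓ * maf σ + col σ

end CP

/-- The q-integer `[k]_q = 1 + q + ⋯ + q^{k-1}`. -/
def qint {R : Type*} [CommSemiring R] (q : R) (k : ℕ) : R := ∑ i ∈ range k, q ^ i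

/-! ### Gaussian binomial coefficients -/

namespace ShuffleMaj
open Polynomial

/-- The Gaussian binomial coefficient `[m + k choose k]_q` with `q = X`, defined by one of the two
`q`-Pascal rules. -/
noncomputable def gb : ℕ → ℕ → ℤ[X]
  | 0, _ => 1
  | _ + 1, 0 => 1
  | m + 1, k + 1 => gb m (k + 1) + X ^ (m + 1) * gb (m + 1) k

lemma gb_zero_left (k : ℕ) : gb 0 k = 1 := by simp [gb]

lemma gb_zero_right (m : ℕ) : gb m 0 = 1 := by cases m <;> simp [gb]

lemma gb_succ (m k : ℕ) :
    gb (m + 1) (k + 1) = gb m (k + 1) + X ^ (m + 1) * gb (m + 1) k := by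
  rw [gb]

/-- The other `q`-Pascal rule, dual to the one in the definition of `gb`. -/
lemma gb_succ' (m k : ℕ) :
    gb (m + 1) (k + 1) = X ^ (k + 1) * gb m (k + 1) + gb (m + 1) k := by
  induction hs : m + k using Nat.strong_induction_on generalizing m k with
  | _ s ih =>
    rcases m with _ | m <;> rcases k with _ | k
    · simp [gb_succ, gb_zero_left, gb_zero_right, add_comm]
    · have h1 := gb_succ 0 (k + 1)
      have h2 := gb_succ 0 k
      have h3 := ih k (by omega) 0 k (by omega)
      simp only [gb_zero_left, zero_add, pow_one, mul_one] at h1 h2 h3 ⊢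
      linear_combination h1 + X * h3 - h2
    · have h1 := gb_succ (m + 1) 0
      have h2 := gb_succ m 0
      have h3 := ih m (by omega) m 0 (by omega)
      simp only [gb_zero_right, zero_add, pow_one, mul_one] at h1 h2 h3 ⊢
      linear_combination h1 + h3 - X * h2
    · have h1 := gb_succ (m + 1) (k + 1)
      have h2 := gb_succ m (k + 1)
      have h3 := ih (m + (k + 1)) (by omega) m (k + 1) (by omega)
      have h4 := ih (m + 1 + k) (by omega) (m + 1) k (by omega)
      have h5 := gb_succ (m + 1) k
      linear_combination h1 + h3 + X ^ (m + 2) * h4 - X ^ (k + 2) * h2 - h5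

/-- Splits a sum over `(k + 1)`-subsets of `{0, …, N}` according to whether `N` belongs to the subset. -/
lemma sum_powersetCard_range_succ {M : Type*} [AddCommMonoid M] (N k : ℕ)
    (f : Finset ℕ → M) :
    ∑ S ∈ powersetCard (k + 1) (range (N + 1)), f S =
      ∑ S ∈ powersetCard (k + 1) (range N), f S +
        ∑ S ∈ powersetCard k (range N), f (insert N S) := by
  rw [range_add_one, powersetCard_succ_insert (by simp), sum_union, sum_image]
  · intro S hS T hT h
    have hS' : N ∉ S := fun h => by simpa using (mem_powersetCard.1 hS).1 h
    have hT' : N ∉ T := fun h => by simpa using (mem_powersetCard.1 hT).1 h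
    rw [← erase_insert hS', ← erase_insert hT', h]
  · rw [disjoint_left]
    intro S hS hS'
    obtain ⟨T, -, rfl⟩ := mem_image.1 hS'
    simpa using (mem_powersetCard.1 hS).1 (mem_insert_self N T)

/-! ### The major index of shuffles with zeros -/

/-- Number of positions before `p` that are not in `S`; for `p ∉ S`, this is the index of the letter
at position `p` when the positions in `S` carry zeros and the others carry the letters `0, 1, …`
in this order. -/
def rk (S : Finset ℕ) (p : ℕ) : ℕ := (range p \ S).card

/-- Whether the shuffle with zero positions `S` has a descent at the 0-based place `p`. Here `E i`
says that letter `i` is larger than the zeros (otherwise it is smaller), and `D i` says that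
letter `i` is larger than letter `i + 1`. If `p ∈ S`, then `rk S p` is also the index of the letter
at position `p + 1`. -/
def dsc (E D : ℕ → Bool) (S : Finset ℕ) (p : ℕ) : Bool :=
  if p ∈ S then decide (p + 1 ∉ S) && !E (rk S p)
  else if p + 1 ∈ S then E (rk S p) else D (rk S p)

lemma dsc_zero {E D : ℕ → Bool} {S : Finset ℕ} {p : ℕ} (h : p ∈ S) :
    dsc E D S p = (decide (p + 1 ∉ S) && !E (rk S p)) := if_pos h

lemma dsc_letter_zero {E D : ℕ → Bool} {S : Finset ℕ} {p : ℕ} (h : p ∉ S) (h' : p + 1 ∈ S) :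
    dsc E D S p = E (rk S p) := by rw [dsc, if_neg h, if_pos h']

lemma dsc_letter_letter {E D : ℕ → Bool} {S : Finset ℕ} {p : ℕ} (h : p ∉ S) (h' : p + 1 ∉ S) :
    dsc E D S p = D (rk S p) := by rw [dsc, if_neg h, if_neg h']

/-- Sum of the 1-based descent places among the first `N` places of the shuffle; this is the major
index of the shuffle of length `N + 1`. -/
def wmaj (E D : ℕ → Bool) (S : Finset ℕ) (N : ℕ) : ℕ :=
  ∑ p ∈ range N, if dsc E D S p then p + 1 else 0

/-- Sum of the 1-based descent places among the first `M` places of the word of letters alone. -/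
def vmaj (D : ℕ → Bool) (M : ℕ) : ℕ := ∑ i ∈ range M, if D i then i + 1 else 0

lemma wmaj_congr (E D : ℕ → Bool) {S T : Finset ℕ} {N : ℕ} (h : ∀ p ≤ N, p ∈ S ↔ p ∈ T) :
    wmaj E D S N = wmaj E D T N := by
  refine sum_congr rfl fun p hp => ?_
  have hp := mem_range.1 hp
  have hr : rk S p = rk T p := by
    unfold rk; congr 1; ext x
    simp only [mem_sdiff, mem_range]
    constructor <;> rintro ⟨h1, h2⟩ <;> refine ⟨h1, ?_⟩
    · rwa [← h x (by omega)]
    · rwa [h x (by omega)]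
  have hd : dsc E D S p = dsc E D T p := by
    simp only [dsc, hr, h p hp.le, decide_not, h (p + 1) hp]
  rw [hd]

lemma rk_eq {S : Finset ℕ} {m k : ℕ} (hS : S ∈ powersetCard k (range (m + k))) :
    rk S (m + k) = m := by
  obtain ⟨h1, h2⟩ := mem_powersetCard.1 hS
  rw [rk, card_sdiff_of_subset h1, card_range, h2]; omega

lemma rk_insert {S : Finset ℕ} {p q : ℕ} (h : p ≤ q) : rk (insert q S) p = rk S p := by
  unfold rk; congr 1; ext x; simp; omega

/-- Generating polynomial of `maj` over the shuffles of the letters `0, …, m` with `k` zeros that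
end in the letter `m`. -/
noncomputable def endL (E D : ℕ → Bool) (m k : ℕ) : ℤ[X] :=
  ∑ S ∈ powersetCard k (range (m + k)), X ^ wmaj E D S (m + k)

/-- Generating polynomial of `maj` over the shuffles of the letters `0, …, m - 1` with `k + 1` zeros
that end in a zero. -/
noncomputable def endZ (E D : ℕ → Bool) (m k : ℕ) : ℤ[X] :=
  ∑ S ∈ powersetCard k (range (m + k)), X ^ wmaj E D (insert (m + k) S) (m + k)

variable (E D : ℕ → Bool)

lemma notMem_of_mem_powersetCard {S : Finset ℕ} {k N p : ℕ}
    (hS : S ∈ powersetCard k (range N)) (h : N ≤ p) : p ∉ S := fun hp => by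
  have := mem_range.1 ((mem_powersetCard.1 hS).1 hp); omega

/-- Deletes the last letter; the position before it holds either the letter `m` or a zero. -/
lemma endL_step (m k : ℕ) :
    endL E D (m + 1) (k + 1) =
      X ^ (if D m then m + k + 2 else 0) * endL E D m (k + 1) +
      X ^ (if E (m + 1) then 0 else m + k + 2) * endZ E D (m + 1) k := by
  unfold endL endZ
  rw [show m + 1 + (k + 1) = m + (k + 1) + 1 by omega, sum_powersetCard_range_succ,
    show m + 1 + k = m + (k + 1) by omega, mul_sum, mul_sum]
  congr 1 <;> refine sum_congr rfl fun S hS => ?_ <;> rw [← pow_add] <;> congr 1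
  · have h1 := notMem_of_mem_powersetCard hS le_rfl
    have h2 := notMem_of_mem_powersetCard hS (Nat.le_succ _)
    rw [wmaj, sum_range_succ, ← wmaj, dsc_letter_letter h1 h2, rk_eq hS, add_comm]
    rfl
  · have h2 := notMem_of_mem_powersetCard hS (Nat.le_succ _)
    have hS' : S ∈ powersetCard k (range ((m + 1) + k)) := by
      rwa [show m + 1 + k = m + (k + 1) by omega]
    have h3 := rk_eq hS'
    rw [show m + 1 + k = m + (k + 1) by omega] at h3
    rw [wmaj, sum_range_succ, ← wmaj, dsc_zero (mem_insert_self _ _), rk_insert le_rfl, h3,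
      add_comm]
    cases E (m + 1)
    · simp [h2]
      omega
    · simp

/-- Deletes the last zero; the position before it holds either the letter `m` or a zero. -/
lemma endZ_step (m k : ℕ) :
    endZ E D (m + 1) (k + 1) =
      X ^ (if E m then m + k + 2 else 0) * endL E D m (k + 1) + endZ E D (m + 1) k := by
  unfold endL endZ
  rw [show m + 1 + (k + 1) = m + (k + 1) + 1 by omega, sum_powersetCard_range_succ,
    show m + 1 + k = m + (k + 1) by omega, mul_sum]
  congr 1 <;> refine sum_congr rfl fun S hS => ?_
  · rw [← pow_add]; congr 1
    have h1 := notMem_of_mem_powersetCard hS le_rfl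
    rw [wmaj, sum_range_succ, ← wmaj, dsc_letter_zero (by simp [h1]) (mem_insert_self _ _),
      rk_insert (by omega), rk_eq hS, add_comm]
    congr 1
    apply wmaj_congr
    intro p hp
    simp; omega
  · congr 1
    rw [wmaj, sum_range_succ, ← wmaj, dsc_zero (by simp)]
    simp only [mem_insert_self, not_true_eq_false, decide_false, Bool.false_and,
      Bool.false_eq_true, if_false, add_zero]
    apply wmaj_congr
    intro p hp
    simp; omega

lemma rk_empty (p : ℕ) : rk ∅ p = p := by simp [rk]

lemma wmaj_empty (N : ℕ) : wmaj E D ∅ N = vmaj D N := by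
  simp [wmaj, vmaj, dsc, rk_empty]

lemma endL_zero (m : ℕ) : endL E D m 0 = X ^ vmaj D m := by
  simp [endL, wmaj_empty]

lemma endZ_zero (m : ℕ) :
    endZ E D m 0 = X ^ (vmaj D (m - 1) + if E (m - 1) then m else 0) := by
  simp only [endZ, add_zero, powersetCard_zero, sum_singleton]
  congr 1
  rcases m with _ | m
  · simp [wmaj, vmaj]
  · rw [wmaj, sum_range_succ, ← wmaj, dsc_letter_zero (by simp) (by simp),
      rk_insert (by omega), rk_empty, wmaj_congr (T := ∅), wmaj_empty]
    · simp
    · simp; omega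

lemma dsc_range {p N : ℕ} (h : p + 1 < N) : dsc E D (range N) p = false := by
  simp [dsc, h]; omega

lemma endL_zero_left (k : ℕ) : endL E D 0 k = X ^ (if E 0 then 0 else k) := by
  have := powersetCard_self (range k)
  rw [card_range] at this
  simp only [endL, zero_add, this, sum_singleton]
  congr 1
  rcases k with _ | k
  · simp [wmaj]
  · rw [wmaj, sum_range_succ, sum_eq_zero]
    · have : rk (range (k + 1)) k = 0 := by
        simp [rk, sdiff_eq_empty_iff_subset]
      cases hE : E 0 <;> simp [dsc, this, hE]
    · intro p hp
      rw [dsc_range E D (by simpa using hp)]; simp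

lemma endZ_zero_left (k : ℕ) : endZ E D 0 k = 1 := by
  have := powersetCard_self (range k)
  rw [card_range] at this
  simp only [endZ, zero_add, this, sum_singleton, ← range_add_one]
  rw [wmaj, sum_eq_zero, pow_zero]
  intro p hp
  rw [dsc_range E D (by simpa using hp)]; simp

variable {E D}

/-- Closed forms of `endL` and `endZ`. The hypotheses say that a letter above the zeros is larger
than an adjacent letter below the zeros. For `m = 0` the truncated `m - 1` is harmless, since both
summands of the exponent vanish. -/
lemma end_eq (h1 : ∀ i, E i = true → E (i + 1) = false → D i = true)
    (h2 : ∀ i, E i = false → E (i + 1) = true → D i = false) (s m k : ℕ) (hs : m + k = s) :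
    endL E D m k = X ^ (vmaj D m + if E m then 0 else k) * gb m k ∧
    endZ E D m k = X ^ (vmaj D (m - 1) + if E (m - 1) then m else 0) * gb m k := by
  induction s using Nat.strong_induction_on generalizing m k with
  | _ s ih =>
    rcases m with _ | m
    · simp [endL_zero_left, endZ_zero_left, gb_zero_left, vmaj]
    rcases k with _ | k
    · simp [endL_zero, endZ_zero, gb_zero_right]
    have hL := (ih (m + (k + 1)) (by omega) m (k + 1) rfl).1
    have hZ := (ih (m + 1 + k) (by omega) (m + 1) k rfl).2
    have hv : vmaj D (m + 1) = vmaj D m + if D m then m + 1 else 0 := by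
      rw [vmaj, sum_range_succ, ← vmaj]
    have a1 := h1 m
    have a2 := h2 m
    rw [Nat.add_sub_cancel] at hZ ⊢
    constructor
    · rw [endL_step, hL, hZ, hv]
      cases hE : E m <;> cases hE' : E (m + 1) <;> cases hD : D m <;>
        simp_all only [Bool.false_eq_true, reduceCtorEq, if_true, if_false, forall_const,
          IsEmpty.forall_iff, add_zero]
      · linear_combination (-X ^ (vmaj D m + k + 1)) * gb_succ m k
      · linear_combination (-X ^ (vmaj D m + m + k + 2)) * gb_succ' m k
      · linear_combination (-X ^ vmaj D m) * gb_succ' m k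
      · linear_combination (-X ^ (vmaj D m + m + k + 2)) * gb_succ m k
      · linear_combination (-X ^ vmaj D m) * gb_succ m k
      · linear_combination (-X ^ (vmaj D m + m + 1)) * gb_succ' m k
    · rw [endZ_step, hL, hZ]
      cases hE : E m
      · simp only [Bool.false_eq_true, if_false]
        linear_combination (-X ^ vmaj D m) * gb_succ' m k
      · simp only [if_true]
        linear_combination (-X ^ (vmaj D m + m + 1)) * gb_succ' m k

/-- The distribution of `maj` over all shuffles of `m` letters with `k` zeros. -/
lemma sum_wmaj (h1 : ∀ i, E i = true → E (i + 1) = false → D i = true)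
    (h2 : ∀ i, E i = false → E (i + 1) = true → D i = false) (m k : ℕ) :
    ∑ S ∈ powersetCard k (range (m + k)), (X : ℤ[X]) ^ wmaj E D S (m + k - 1) =
      X ^ vmaj D (m - 1) * gb m k := by
  rcases m with _ | m
  · have := powersetCard_self (range k)
    rw [card_range] at this
    simp only [zero_add, this, sum_singleton, gb_zero_left]
    rw [wmaj, sum_eq_zero]
    · simp [vmaj]
    intro p hp
    rw [dsc_range E D (by have := mem_range.1 hp; omega)]; simp
  rcases k with _ | k
  · simp [wmaj_empty, gb_zero_right]
  rw [show m + 1 + (k + 1) = m + (k + 1) + 1 by omega, sum_powersetCard_range_succ,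
    Nat.add_sub_cancel, Nat.add_sub_cancel]
  have hL := (end_eq h1 h2 _ m (k + 1) rfl).1
  have hZ := (end_eq h1 h2 _ (m + 1) k rfl).2
  unfold endL at hL
  unfold endZ at hZ
  rw [show m + 1 + k = m + (k + 1) by omega] at hZ
  rw [hL, hZ, Nat.add_sub_cancel]
  have g1 := gb_succ m k
  have g2 := gb_succ' m k
  cases hE : E m
  · simp only [Bool.false_eq_true, if_false]
    linear_combination (-X ^ vmaj D m) * g2
  · simp only [if_true]
    linear_combination (-X ^ vmaj D m) * g1

/-- The distribution of the element sum over `k`-subsets of `{0, …, m + k - 1}`. -/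
lemma sum_sum_eq (m k : ℕ) :
    ∑ S ∈ powersetCard k (range (m + k)), (X : ℤ[X]) ^ (∑ i ∈ S, i) =
      X ^ (k.choose 2) * gb m k := by
  induction hs : m + k using Nat.strong_induction_on generalizing m k with
  | _ s ih =>
    subst hs
    rcases m with _ | m
    · have := powersetCard_self (range k)
      rw [card_range] at this
      simp [this, gb_zero_left, sum_range_id, Nat.choose_two_right]
    rcases k with _ | k
    · simp [gb_zero_right]
    rw [show m + 1 + (k + 1) = m + (k + 1) + 1 by omega, sum_powersetCard_range_succ,
      ih (m + (k + 1)) (by omega) m (k + 1) rfl]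
    have e : ∑ S ∈ powersetCard k (range (m + (k + 1))),
        (X : ℤ[X]) ^ (∑ i ∈ insert (m + (k + 1)) S, i) =
        X ^ (m + (k + 1)) * (X ^ (k.choose 2) * gb (m + 1) k) := by
      rw [← ih (m + 1 + k) (by omega) (m + 1) k rfl, mul_sum,
        show m + 1 + k = m + (k + 1) by omega]
      refine sum_congr rfl fun S hS => ?_
      rw [sum_insert (notMem_of_mem_powersetCard hS le_rfl), pow_add]
    rw [e, gb_succ, Nat.choose_succ_succ' k 1, Nat.choose_one_right]
    ring

lemma choose_two_le_sum (S : Finset ℕ) : S.card.choose 2 ≤ ∑ i ∈ S, i := by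
  induction hc : S.card generalizing S with
  | zero => simp
  | succ k ih =>
    have hne : S.Nonempty := card_pos.1 (by omega)
    have hk : k ≤ S.max' hne := by
      have : S ⊆ range (S.max' hne + 1) := fun x hx => by
        have := S.le_max' x hx
        simp; omega
      have := card_le_card this
      rw [card_range] at this; omega
    have := ih (S.erase (S.max' hne)) (by rw [card_erase_of_mem (S.max'_mem hne)]; omega)
    rw [← add_sum_erase S _ (S.max'_mem hne), Nat.choose_succ_succ' k 1, Nat.choose_one_right,
      one_add_one_eq_two]
    omega

/-- For a fixed word of letters, `maf` (left) and `maj` (right) are equidistributed over the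
shuffles with `k` zeros. -/
lemma card_filter_eq (h1 : ∀ i, E i = true → E (i + 1) = false → D i = true)
    (h2 : ∀ i, E i = false → E (i + 1) = true → D i = false) (m k : ℕ)
    (P : ℕ → Prop) [DecidablePred P] :
    ((powersetCard k (range (m + k))).filter fun S =>
        P (vmaj D (m - 1) + (∑ i ∈ S, i - k.choose 2))).card =
    ((powersetCard k (range (m + k))).filter fun S => P (wmaj E D S (m + k - 1))).card := by
  have key : ∑ S ∈ powersetCard k (range (m + k)),
      (X : ℤ[X]) ^ (vmaj D (m - 1) + (∑ i ∈ S, i - k.choose 2)) =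
      ∑ S ∈ powersetCard k (range (m + k)), (X : ℤ[X]) ^ wmaj E D S (m + k - 1) := by
    rw [sum_wmaj h1 h2]
    have hX : (X : ℤ[X]) ^ k.choose 2 ≠ 0 := pow_ne_zero _ X_ne_zero
    refine mul_left_cancel₀ hX ?_
    rw [mul_left_comm, ← sum_sum_eq, mul_sum, mul_sum]
    refine sum_congr rfl fun S hS => ?_
    have := choose_two_le_sum S
    rw [(mem_powersetCard.1 hS).2] at this
    rw [← pow_add, ← pow_add]
    congr 1; omega
  have hm : (powersetCard k (range (m + k))).val.map
      (fun S => vmaj D (m - 1) + (∑ i ∈ S, i - k.choose 2)) =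
      (powersetCard k (range (m + k))).val.map (fun S => wmaj E D S (m + k - 1)) := by
    ext j
    have := congrArg (fun p : ℤ[X] => p.coeff j) key
    simp only [finsetSum_coeff, coeff_X_pow, sum_boole] at this
    simp only [Multiset.count_map]
    exact_mod_cast this
  have := congrArg (Multiset.countP P) hm
  simp only [Multiset.countP_map] at this
  exact this

end ShuffleMaj

/-! ### Inflating a derangement by fixed points -/

namespace CP

variable {ℓ m n : ℕ}

/-- Letter `i` of `δ` is excedant. Beyond the length of `δ` the junk letter `(0, 0)` gives `false`. -/
def excB (δ : CP ℓ m) (i : ℕ) : Bool := decide ((letter δ i).1 = 0 ∧ i < (letter δ i).2)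

/-- There is a descent between letters `i` and `i + 1` of `δ`. At the last letter the comparison is
with the junk letter `(0, 0)`, which is consistent with `excB`. -/
def desB (δ : CP ℓ m) (i : ℕ) : Bool := decide (gtLetter (letter δ i) (letter δ (i + 1)))

lemma letter_fin (σ : CP ℓ n) (i : Fin n) : letter σ i = ((σ.2 i : ℕ), (σ.1 i : ℕ)) := by
  simp [letter]

lemma maj_eq_vmaj (δ : CP ℓ m) : maj δ = ShuffleMaj.vmaj (desB δ) (m - 1) := by
  simp only [maj, desSet, ShuffleMaj.vmaj, sum_filter, desB, decide_eq_true_eq]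

lemma ne_of_fixSet_eq_empty {δ : CP ℓ m} (hδ : fixSet δ = ∅) (j : Fin m)
    (h : (δ.2 j : ℕ) = 0) : (δ.1 j : ℕ) ≠ j := by
  intro h'
  have : j ∈ fixSet δ := by simp [fixSet, h, Fin.ext_iff, h']
  simp [hδ] at this

/-- In a derangement, an excedant letter followed by a non-excedant one makes a descent. The
hypothesis excludes the case that the letter after `i` is a fixed point. -/
lemma desB_of_exc {δ : CP ℓ m} (hδ : fixSet δ = ∅) (i : ℕ) (h : excB δ i = true)
    (h' : excB δ (i + 1) = false) : desB δ i = true := by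
  simp only [excB, desB, decide_eq_true_eq, decide_eq_false_iff_not] at h h' ⊢
  rw [gtLetter]
  by_cases hi : i + 1 < m
  · have hne := ne_of_fixSet_eq_empty hδ ⟨i + 1, hi⟩
    have hl : letter δ (i + 1) = _ := letter_fin δ ⟨i + 1, hi⟩
    rw [hl] at h' ⊢
    dsimp only at hne h' ⊢
    omega
  · have hl : letter δ (i + 1) = (0, 0) := by simp [letter, hi]
    rw [hl]
    dsimp only
    omega

lemma desB_of_not_exc {δ : CP ℓ m} (i : ℕ) (h : excB δ i = false)
    (h' : excB δ (i + 1) = true) : desB δ i = false := by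
  simp only [excB, desB, decide_eq_true_eq, decide_eq_false_iff_not] at h h' ⊢
  rw [gtLetter]
  omega

/-- `σ` is obtained from `δ` by inserting fixed points so that they occupy the positions in `S`: with
`e` the increasing bijection from `Fin m` to the complement of `S`, one has `σ ∘ e = e ∘ δ`, with
the same colors. -/
structure Inflates (δ : CP ℓ m) (S : Finset (Fin n)) (h : Sᶜ.card = m) (σ : CP ℓ n) : Prop where
  fixed : ∀ i ∈ S, σ.1 i = i ∧ (σ.2 i : ℕ) = 0
  perm : ∀ j, σ.1 (Sᶜ.orderEmbOfFin h j) = Sᶜ.orderEmbOfFin h (δ.1 j)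
  color : ∀ j, σ.2 (Sᶜ.orderEmbOfFin h j) = δ.2 j

lemma exists_orderEmb {S : Finset (Fin n)} (h : Sᶜ.card = m) {i : Fin n} (hi : i ∉ S) :
    ∃ j, Sᶜ.orderEmbOfFin h j = i := by
  have : i ∈ Set.range (Sᶜ.orderEmbOfFin h) := by
    rw [range_orderEmbOfFin]; simpa using hi
  exact this

lemma orderEmb_notMem {S : Finset (Fin n)} (h : Sᶜ.card = m) (j : Fin m) :
    Sᶜ.orderEmbOfFin h j ∉ S :=
  mem_compl.1 (orderEmbOfFin_mem Sᶜ h j)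

/-- The colored permutation obtained from `δ` by inserting fixed points at the positions in `S`. -/
def inflate (hℓ : 1 ≤ ℓ) (δ : CP ℓ m) (S : Finset (Fin n)) (h : Sᶜ.card = m) : CP ℓ n :=
  (δ.1.extendDomain (Sᶜ.orderIsoOfFin h).toEquiv,
    fun i => if hi : i ∈ Sᶜ then δ.2 ((Sᶜ.orderIsoOfFin h).symm ⟨i, hi⟩) else ⟨0, hℓ⟩)

lemma inflates_inflate (hℓ : 1 ≤ ℓ) (δ : CP ℓ m) (S : Finset (Fin n)) (h : Sᶜ.card = m) :
    Inflates δ S h (inflate hℓ δ S h) where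
  fixed i hi := by
    refine ⟨Equiv.Perm.extendDomain_apply_not_subtype _ _ (by simpa using hi), ?_⟩
    simp [inflate, hi]
  perm j := by
    simp only [← coe_orderIsoOfFin_apply]
    exact Equiv.Perm.extendDomain_apply_image _ (Sᶜ.orderIsoOfFin h).toEquiv j
  color j := by
    have := orderEmbOfFin_mem Sᶜ h j
    simp only [inflate, dif_pos this]
    refine congrArg δ.2 ?_
    rw [OrderIso.symm_apply_eq]
    ext
    simp

namespace Inflates

variable {δ δ' : CP ℓ m} {S : Finset (Fin n)} {h : Sᶜ.card = m} {σ σ' : CP ℓ n}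

lemma ext_right (H : Inflates δ S h σ) (H' : Inflates δ S h σ') : σ = σ' := by
  have key : ∀ i, σ.1 i = σ'.1 i ∧ σ.2 i = σ'.2 i := by
    intro i
    by_cases hi : i ∈ S
    · refine ⟨by rw [(H.fixed i hi).1, (H'.fixed i hi).1], Fin.ext ?_⟩
      rw [(H.fixed i hi).2, (H'.fixed i hi).2]
    · obtain ⟨j, rfl⟩ := exists_orderEmb h hi
      exact ⟨by rw [H.perm, H'.perm], by rw [H.color, H'.color]⟩
  exact Prod.ext (Equiv.ext fun i => (key i).1) (funext fun i => (key i).2)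

lemma ext_left (H : Inflates δ S h σ) (H' : Inflates δ' S h σ) : δ = δ' := by
  refine Prod.ext (Equiv.ext fun j => ?_) (funext fun j => ?_)
  · apply (Sᶜ.orderEmbOfFin h).injective
    rw [← H.perm, ← H'.perm]
  · rw [← H.color, ← H'.color]

lemma fixSet_eq (H : Inflates δ S h σ) (hδ : fixSet δ = ∅) : fixSet σ = S := by
  ext i
  by_cases hi : i ∈ S
  · simp [fixSet, hi, H.fixed i hi]
  · obtain ⟨j, rfl⟩ := exists_orderEmb h hi
    simp only [hi, iff_false]
    intro hj
    simp only [fixSet, mem_filter, mem_univ, true_and, H.perm, H.color,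
      EmbeddingLike.apply_eq_iff_eq] at hj
    exact ne_of_fixSet_eq_empty hδ j hj.2 (by rw [hj.1])

lemma exc_eq (H : Inflates δ S h σ) : exc σ = exc δ := by
  unfold exc
  rw [← card_map (Sᶜ.orderEmbOfFin h).toEmbedding]
  congr 1
  ext i
  simp only [mem_filter, mem_univ, true_and, mem_map, RelEmbedding.coe_toEmbedding]
  constructor
  · rintro ⟨h0, h1⟩
    by_cases hi : i ∈ S
    · rw [(H.fixed i hi).1] at h1; omega
    · obtain ⟨j, rfl⟩ := exists_orderEmb h hi
      rw [H.color] at h0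
      rw [H.perm, Fin.val_fin_lt, OrderEmbedding.lt_iff_lt] at h1
      exact ⟨j, ⟨h0, h1⟩, rfl⟩
  · rintro ⟨j, ⟨h0, h1⟩, rfl⟩
    rw [H.color, H.perm, Fin.val_fin_lt, OrderEmbedding.lt_iff_lt]
    exact ⟨h0, h1⟩

lemma col_eq (H : Inflates δ S h σ) : col σ = col δ := by
  unfold col
  rw [← sum_compl_add_sum S, sum_eq_zero (s := S) fun i hi => (H.fixed i hi).2, add_zero]
  conv_lhs => rw [← map_orderEmbOfFin_univ Sᶜ h, sum_map]
  exact sum_congr rfl fun j _ => by simp [H.color]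

/-- The `j`-th position outside `S` has rank `j`. -/
lemma rk_orderEmb (S : Finset (Fin n)) (h : Sᶜ.card = m) (j : Fin m) :
    ShuffleMaj.rk (S.map Fin.valEmbedding) (Sᶜ.orderEmbOfFin h j) = j := by
  have : range (Sᶜ.orderEmbOfFin h j : ℕ) \ S.map Fin.valEmbedding =
      (Iio j).map ((Sᶜ.orderEmbOfFin h).toEmbedding.trans Fin.valEmbedding) := by
    ext x
    simp only [mem_sdiff, mem_range, mem_map, mem_Iio, Fin.valEmbedding_apply,
      Function.Embedding.trans_apply, RelEmbedding.coe_toEmbedding]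
    constructor
    · rintro ⟨h1, h2⟩
      have hx : x < n := h1.trans (Fin.is_lt _)
      have hxS : (⟨x, hx⟩ : Fin n) ∉ S := fun hm => h2 ⟨_, hm, rfl⟩
      obtain ⟨j', hj'⟩ := exists_orderEmb h hxS
      refine ⟨j', ?_, by rw [hj']⟩
      rw [← (Sᶜ.orderEmbOfFin h).lt_iff_lt, hj']
      exact h1
    · rintro ⟨j', h1, rfl⟩
      refine ⟨by simpa using h1, ?_⟩
      rintro ⟨y, hy, hy'⟩
      rw [Fin.ext hy'] at hy
      exact orderEmb_notMem h j' hy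
  rw [ShuffleMaj.rk, this, card_map, Fin.card_Iio]

lemma mem_map_val {S : Finset (Fin n)} (i : Fin n) :
    (i : ℕ) ∈ S.map Fin.valEmbedding ↔ i ∈ S := by
  simp [Fin.val_inj]

/-- A fixed point of `σ` compares with its neighbors as a zero that is smaller than the excedant
letters of `δ` and larger than the other ones. -/
lemma des_iff (H : Inflates δ S h σ) (hδ : fixSet δ = ∅) {p : ℕ} (hp : p + 1 < n) :
    gtLetter (letter σ p) (letter σ (p + 1)) ↔
      ShuffleMaj.dsc (excB δ) (desB δ) (S.map Fin.valEmbedding) p = true := by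
  obtain ⟨a, ha⟩ : ∃ a : Fin n, (a : ℕ) = p := ⟨⟨p, by omega⟩, rfl⟩
  obtain ⟨b, hb⟩ : ∃ b : Fin n, (b : ℕ) = p + 1 := ⟨⟨p + 1, hp⟩, rfl⟩
  have rkS : ∀ x : ℕ, x ∈ S.map Fin.valEmbedding →
      ShuffleMaj.rk (S.map Fin.valEmbedding) (x + 1) =
        ShuffleMaj.rk (S.map Fin.valEmbedding) x := by
    intro x hx
    rw [ShuffleMaj.rk, range_add_one, insert_sdiff_of_mem _ hx, ← ShuffleMaj.rk]
  have rkL : ∀ x : ℕ, x ∉ S.map Fin.valEmbedding →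
      ShuffleMaj.rk (S.map Fin.valEmbedding) (x + 1) =
        ShuffleMaj.rk (S.map Fin.valEmbedding) x + 1 := by
    intro x hx
    rw [ShuffleMaj.rk, range_add_one, insert_sdiff_of_notMem _ hx, card_insert_of_notMem (by simp),
      ← ShuffleMaj.rk]
  rw [← hb, ← ha, letter_fin, letter_fin]
  have hab : (a : ℕ) + 1 = b := by omega
  by_cases haS : a ∈ S <;> by_cases hbS : b ∈ S
  · rw [ShuffleMaj.dsc_zero ((mem_map_val a).2 haS), hab]
    simp only [gtLetter, H.fixed a haS, H.fixed b hbS, mem_map_val, hbS, not_true_eq_false,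
      decide_false, Bool.false_and, Bool.false_eq_true, iff_false]
    omega
  · have hr := rkS a ((mem_map_val a).2 haS)
    rw [ShuffleMaj.dsc_zero ((mem_map_val a).2 haS), ← hr, hab]
    obtain ⟨j, rfl⟩ := exists_orderEmb h hbS
    rw [rk_orderEmb, H.perm, H.color, (H.fixed a haS).1, (H.fixed a haS).2]
    have h1 : Sᶜ.orderEmbOfFin h (δ.1 j) ≠ a := fun h1 => orderEmb_notMem h (δ.1 j) (h1 ▸ haS)
    have h2 : Sᶜ.orderEmbOfFin h (δ.1 j) < Sᶜ.orderEmbOfFin h j ↔ δ.1 j < j :=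
      (Sᶜ.orderEmbOfFin h).lt_iff_lt
    have h3 := ne_of_fixSet_eq_empty hδ j
    rw [Fin.lt_def, Fin.lt_def] at h2
    rw [Ne, Fin.ext_iff] at h1
    simp only [gtLetter, mem_map_val, hbS, not_false_eq_true, decide_true, Bool.true_and,
      Bool.not_eq_true', excB, decide_eq_false_iff_not, letter_fin]
    omega
  · rw [ShuffleMaj.dsc_letter_zero (by rwa [mem_map_val]) (by rwa [hab, mem_map_val])]
    obtain ⟨j, rfl⟩ := exists_orderEmb h haS
    rw [rk_orderEmb, H.perm, H.color, (H.fixed b hbS).1, (H.fixed b hbS).2]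
    have h1 : Sᶜ.orderEmbOfFin h (δ.1 j) ≠ b := fun h1 => orderEmb_notMem h (δ.1 j) (h1 ▸ hbS)
    have h2 : Sᶜ.orderEmbOfFin h j < Sᶜ.orderEmbOfFin h (δ.1 j) ↔ j < δ.1 j :=
      (Sᶜ.orderEmbOfFin h).lt_iff_lt
    rw [Fin.lt_def, Fin.lt_def] at h2
    rw [Ne, Fin.ext_iff] at h1
    simp only [gtLetter, excB, decide_eq_true_eq, letter_fin]
    omega
  · have hr := rkL a (by rwa [mem_map_val])
    rw [ShuffleMaj.dsc_letter_letter (by rwa [mem_map_val]) (by rwa [hab, mem_map_val])]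
    rw [hab] at hr
    obtain ⟨j, rfl⟩ := exists_orderEmb h haS
    obtain ⟨j', rfl⟩ := exists_orderEmb h hbS
    rw [rk_orderEmb, rk_orderEmb] at hr
    rw [rk_orderEmb, H.perm, H.color, H.perm, H.color]
    have h2 : Sᶜ.orderEmbOfFin h (δ.1 j') < Sᶜ.orderEmbOfFin h (δ.1 j) ↔ δ.1 j' < δ.1 j :=
      (Sᶜ.orderEmbOfFin h).lt_iff_lt
    rw [Fin.lt_def, Fin.lt_def] at h2
    simp only [gtLetter, desB, decide_eq_true_eq, ← hr, letter_fin, h2]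

lemma maj_eq (H : Inflates δ S h σ) (hδ : fixSet δ = ∅) :
    maj σ = ShuffleMaj.wmaj (excB δ) (desB δ) (S.map Fin.valEmbedding) (n - 1) := by
  rw [maj, desSet, sum_filter, ShuffleMaj.wmaj]
  refine sum_congr rfl fun p hp => ?_
  have hp := mem_range.1 hp
  simp only [H.des_iff hδ (show p + 1 < n by omega)]

lemma maj_Der (H : Inflates δ S h σ) (hδ : fixSet δ = ∅) : maj (Der σ) = maj δ := by
  obtain rfl := H.fixSet_eq hδ
  have hm : m = n - fix σ := by rw [← card_nonfix, h]
  subst hm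
  congr 1
  have himg : (fixSet σ)ᶜ.image σ.1 = (fixSet σ)ᶜ := by
    apply eq_of_subset_of_card_le
    · intro x hx
      obtain ⟨y, hy, rfl⟩ := mem_image.1 hx
      obtain ⟨j, rfl⟩ := exists_orderEmb h (by simpa using hy)
      rw [H.perm]
      exact orderEmbOfFin_mem _ _ _
    · rw [card_image_of_injective _ σ.1.injective]
  -- `Der` ranks the values in the image of the nonfixed positions, which equals that set of
  -- positions only propositionally; hence the detour through a variable set `T`.
  have key : ∀ (T : Finset (Fin n)) (hT : T.card = n - fix σ), T = (fixSet σ)ᶜ →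
      ∀ (j : Fin (n - fix σ)) (x : {x // x ∈ T}), (x : Fin n) = (fixSet σ)ᶜ.orderEmbOfFin h j →
      (T.orderIsoOfFin hT).symm x = j := by
    rintro T hT rfl j x hx
    rw [OrderIso.symm_apply_eq]
    ext
    simp [hx]
  refine Prod.ext (Equiv.ext fun j => ?_) (funext fun j => ?_)
  · refine key _ (card_vals σ) himg (δ.1 j) _ ?_
    rw [← H.perm]
    rfl
  · exact H.color j

lemma maf_eq (H : Inflates δ S h σ) (hδ : fixSet δ = ∅) :
    maf σ = ShuffleMaj.vmaj (desB δ) (m - 1) +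
      (∑ i ∈ S.map Fin.valEmbedding, i - S.card.choose 2) := by
  rw [maf, H.maj_Der hδ, fix, H.fixSet_eq hδ, maj_eq_vmaj, sum_map]
  rfl

end Inflates

/-- Every colored permutation is the inflation of a derangement by its set of fixed points. -/
lemma exists_inflates (σ : CP ℓ n) (h : (fixSet σ)ᶜ.card = m) :
    ∃ δ : CP ℓ m, fixSet δ = ∅ ∧ Inflates δ (fixSet σ) h σ := by
  have hf : ∀ i, σ.1 i ∈ fixSet σ → i ∈ fixSet σ := by
    intro i hi
    have h1 : σ.1 (σ.1 i) = σ.1 i := (mem_filter.1 hi).2.1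
    have h2 := σ.1.injective h1
    rwa [h2] at hi
  have hstab : ∀ i, σ.1 i ∈ (fixSet σ)ᶜ ↔ i ∈ (fixSet σ)ᶜ := by
    intro i
    simp only [mem_compl, not_iff_not]
    refine ⟨hf i, fun hi => ?_⟩
    have : σ.1 i = i := (mem_filter.1 hi).2.1
    rwa [this]
  let e := (fixSet σ)ᶜ.orderIsoOfFin h
  let δ : CP ℓ m := ((e.toEquiv.trans (σ.1.subtypePerm hstab)).trans e.symm.toEquiv,
    fun j => σ.2 (e j))
  have H : Inflates δ (fixSet σ) h σ := by
    refine ⟨fun i hi => by simpa [fixSet] using hi, fun j => ?_, fun j => rfl⟩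
    have : e (δ.1 j) = σ.1.subtypePerm hstab (e j) := by simp [δ]
    exact (congrArg Subtype.val this).symm
  refine ⟨δ, eq_empty_of_forall_notMem fun j hj => ?_, H⟩
  have hj := (mem_filter.1 hj).2
  refine orderEmb_notMem h j (mem_filter.2 ⟨mem_univ _, ?_⟩)
  rw [H.perm, H.color, hj.1]
  exact ⟨rfl, hj.2⟩

/-- Counting colored permutations with `c` fixed points by pairs `(δ, S)` of a derangement `δ` and a
set `S` of fixed positions, for a property `st` of `σ` that is expressed by `P δ S`. -/
lemma card_filter_eq_sum (hℓ : 1 ≤ ℓ) (m c b : ℕ) (st : CP ℓ (m + c) → Prop) [DecidablePred st]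
    (P : CP ℓ m → Finset ℕ → Prop) [∀ δ, DecidablePred (P δ)]
    (hP : ∀ (δ : CP ℓ m) (S : Finset (Fin (m + c))) (h : Sᶜ.card = m) (σ : CP ℓ (m + c)),
      fixSet δ = ∅ → S.card = c → Inflates δ S h σ → (st σ ↔ P δ (S.map Fin.valEmbedding))) :
    ((univ : Finset (CP ℓ (m + c))).filter fun σ => st σ ∧ exc σ = b ∧ fix σ = c).card =
    ∑ δ ∈ (univ : Finset (CP ℓ m)).filter (fun δ => fixSet δ = ∅ ∧ exc δ = b),
      ((powersetCard c (range (m + c))).filter fun S => P δ S).card := by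
  have hinner : ∀ δ : CP ℓ m, ((powersetCard c (range (m + c))).filter fun S => P δ S).card =
      ((powersetCard c (univ : Finset (Fin (m + c)))).filter fun S =>
        P δ (S.map Fin.valEmbedding)).card := by
    intro δ
    have hr : range (m + c) = (univ : Finset (Fin (m + c))).map Fin.valEmbedding := by
      rw [Fin.map_valEmbedding_univ, Nat.Iio_eq_range]
    rw [hr, powersetCard_map, filter_map, card_map]
    rfl
  simp only [hinner]
  rw [← card_sigma]
  have hcard : ∀ S : Finset (Fin (m + c)), S.card = c → Sᶜ.card = m := fun S hS => by
    rw [card_compl, Fintype.card_fin, hS]; omega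
  have hmem : ∀ x : Σ _ : CP ℓ m, Finset (Fin (m + c)),
      x ∈ ((univ : Finset (CP ℓ m)).filter (fun δ => fixSet δ = ∅ ∧ exc δ = b)).sigma
        (fun δ => (powersetCard c (univ : Finset (Fin (m + c)))).filter fun S =>
          P δ (S.map Fin.valEmbedding)) ↔
      (fixSet x.1 = ∅ ∧ exc x.1 = b) ∧ x.2.card = c ∧ P x.1 (x.2.map Fin.valEmbedding) := by
    intro x
    simp [mem_sigma, mem_powersetCard]
  symm
  refine card_bij
    (fun x hx => inflate hℓ x.1 x.2 (hcard x.2 ((hmem x).1 hx).2.1)) ?_ ?_ ?_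
  · intro x hx
    obtain ⟨⟨h1, h2⟩, h3, h4⟩ := (hmem x).1 hx
    have H := inflates_inflate hℓ x.1 x.2 (hcard x.2 h3)
    simp only [mem_filter, mem_univ, true_and]
    refine ⟨(hP _ _ _ _ h1 h3 H).2 h4, by rw [H.exc_eq, h2], by rw [fix, H.fixSet_eq h1, h3]⟩
  · rintro ⟨δ, S⟩ hx ⟨δ', S'⟩ hy hxy
    obtain ⟨⟨h1, h2⟩, h3, h4⟩ := (hmem _).1 hx
    obtain ⟨⟨h1', h2'⟩, h3', h4'⟩ := (hmem _).1 hy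
    have H := inflates_inflate hℓ δ S (hcard S h3)
    have H' := inflates_inflate hℓ δ' S' (hcard S' h3')
    have hSS : S = S' := by
      rw [← H.fixSet_eq h1, ← H'.fixSet_eq h1']
      exact congrArg fixSet hxy
    subst hSS
    have hxy' : inflate hℓ δ S (hcard S h3) = inflate hℓ δ' S (hcard S h3') := hxy
    rw [← hxy'] at H'
    rw [H.ext_left H']
  · intro σ hσ
    simp only [mem_filter, mem_univ, true_and] at hσ
    obtain ⟨h1, h2, h3⟩ := hσ
    obtain ⟨δ, hδ, H⟩ := exists_inflates σ (hcard _ h3)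
    exact ⟨⟨δ, fixSet σ⟩,
      (hmem _).2 ⟨⟨hδ, by rw [← H.exc_eq, h2]⟩, h3, (hP _ _ _ _ hδ h3 H).1 h1⟩,
      (inflates_inflate hℓ δ (fixSet σ) (hcard _ h3)).ext_right H⟩

end CP

/-- The triple statistics `(fmaf, exc, fix)` and `(fmaj, exc, fix)` are
equidistributed on `G_{ℓ,n}`. -/
theorem fmaf_exc_fix_equidistributed_with_fmaj_exc_fix
    (ℓ n : ℕ) (hℓ : 1 ≤ ℓ) (a b c : ℕ) :
    ((univ : Finset (CP ℓ n)).filter fun σ =>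
        CP.fmaf σ = a ∧ CP.exc σ = b ∧ CP.fix σ = c).card =
    ((univ : Finset (CP ℓ n)).filter fun σ =>
        CP.fmaj σ = a ∧ CP.exc σ = b ∧ CP.fix σ = c).card := by
  rcases lt_or_ge n c with hc | hc
  · have hfix : ∀ σ : CP ℓ n, CP.fix σ ≠ c := fun σ h => by
      have := card_le_univ (CP.fixSet σ)
      rw [Fintype.card_fin] at this
      rw [CP.fix] at h
      omega
    simp [hfix]
  obtain ⟨m, rfl⟩ : ∃ m, n = m + c := ⟨n - c, by omega⟩
  rw [CP.card_filter_eq_sum hℓ m c b (fun σ => CP.fmaf σ = a)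
      (fun δ S => ℓ * (ShuffleMaj.vmaj (CP.desB δ) (m - 1) +
        (∑ i ∈ S, i - c.choose 2)) + CP.col δ = a),
    CP.card_filter_eq_sum hℓ m c b (fun σ => CP.fmaj σ = a)
      (fun δ S => ℓ * ShuffleMaj.wmaj (CP.excB δ) (CP.desB δ) S (m + c - 1) + CP.col δ = a)]
  · refine sum_congr rfl fun δ hδ => ?_
    have hδ := (mem_filter.1 hδ).2.1
    exact ShuffleMaj.card_filter_eq (CP.desB_of_exc hδ) CP.desB_of_not_exc m c
      (fun j => ℓ * j + CP.col δ = a)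
  · intro δ S h σ hδ hS H
    rw [CP.fmaj, H.maj_eq hδ, H.col_eq]
  · intro δ S h σ hδ hS H
    rw [CP.fmaf, H.maf_eq hδ, H.col_eq, hS]
end

section
/- Fix integers ℓ≥1 and n≥0. Then, as an identity of polynomials in q and x, Σ_{σ ∈ G_{ℓ,n}} q^{fmaj σ} x^{fix σ} = g_{ℓ,n}(q,x), and likewise Σ_{σ ∈ G_{ℓ,n}} q^{fmaf σ} x^{fix σ} = g_{ℓ,n}(q,x), where g_{ℓ,n}(q,x) = [ℓ]_q[2ℓ]_q⋯[nℓ]_q · Σ_{k=0}^n (x−1)(x−q^ℓ)⋯(x−q^{ℓ(k−1)}) / ([ℓ]_q[2ℓ]_q⋯[kℓ]_q) = Σ_{k=0}^n (x−1)(x−q^ℓ)⋯(x−q^{ℓ(k−1)}) · [(k+1)ℓ]_q[(k+2)ℓ]_q⋯[nℓ]_q. -/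
/-!
Both identities are proved at real points `0 < q < 1`, `x`, which suffices for polynomials
(`poly_ext`). Write `Q = q^ℓ` and `(Q)_n = (1 - Q) ⋯ (1 - Q^n)`.

*Words.* A coloured permutation `σ` and a sequence of gaps `a` in `ℕ^n` encode a word `F` of
length `n` over `ℕ`: take the weakly decreasing `f` with `f_i - f_{i+1} = a_i + [i is a descent]`
and put `F (σ i) = ℓ f_i + c_i`, with `c_i` the colour at `i`. This is a bijection onto all words
(`word_bijective`), the letters of `F` sum to `fmaj σ + ∑ ℓ (j + 1) a_j` (`sum_word`), and the
fixed points of `σ` are the indices that the stable decreasing sort of `F` leaves in place and whose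
letter is divisible by `ℓ` (`wfix_word`). So, with weight `q^(sum of letters)`, words with `k`
fixed points have generating function `A_{n,k} / (Q)_n`, where `A_{n,k}` is the generating function
of `fmaj` over coloured permutations with `k` fixed points; all words together give `(1 - q)^{-n}`.

*Inserting fixed points.* Each letter `v` can be inserted into a word as a fixed point, with a
unique resulting word (`exists_insert`, `ins_removeNth`), and this does not affect the other fixed
points (`mem_wfix_succAbove`). Splitting off fixed letters in increasing order shows that a word
with `k` fixed points amounts to a word without fixed points and a partition into `k` parts
(`goodGF_eq`), that is, `A_{m+k,k} / (Q)_{m+k} = A_{m,0} / (Q)_m · 1 / (Q)_k` (`fixGF_eq`).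

*Conclusion for `fmaj`.* With `D(u) = ∑ A_{m,0} u^m / (Q)_m` and `E_x(u) = ∑ x^k u^k / (Q)_k`, the
generating function sought is `(Q)_n` times the coefficient of `u^n` in `D E_x`. The case `x = 1`
gives `D E_1 = 1 / (1 - u/(1 - q))`, and the `q`-binomial theorem (`cauchy`) gives `E_x = P E_1` with
`P(u) = ∑ (x - 1) ⋯ (x - Q^{k-1}) u^k / (Q)_k`. Hence `D E_x = P / (1 - u/(1 - q))`, whose
coefficients are those of `g` (`real_main`).

*The statistic `fmaf`.* Coloured permutations with fixed point set `S` of size `k` correspond to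
fixed-point-free ones on `m` letters, and `fmaf` differs from `fmaj` of the latter by
`ℓ (∑ S - k(k-1)/2)`. The sum of `Q^(∑ S - k(k-1)/2)` over `S` is a `q`-binomial coefficient
(`subset_sum`), so by the factorisation above `fmaf` and `fmaj` have the same distribution for each
number of fixed points (`fmaf_eq_fixGF`).
-/

open Finset

open MvPolynomial in
/-- `g_{ℓ,n}(q,x) = Σ_{k=0}^n (x−1)(x−q^ℓ)⋯(x−q^{ℓ(k−1)}) · [(k+1)ℓ]_q ⋯ [nℓ]_q`,
as a polynomial in `q = X 0` and `x = X 1`. -/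
noncomputable def gPoly (ℓ n : ℕ) : MvPolynomial (Fin 2) ℤ :=
  ∑ k ∈ range (n + 1),
    (∏ i ∈ range k, (X 1 - (X 0 : MvPolynomial (Fin 2) ℤ) ^ (ℓ * i))) *
      ∏ j ∈ Icc (k + 1) n, qint (X 0 : MvPolynomial (Fin 2) ℤ) (j * ℓ)

/-! ### Encoding coloured permutations by words -/

namespace FixMaj

open CP

variable {ℓ n : ℕ}

/-- Position of the index `w` when the indices of the word `F` are sorted by decreasing value of
`F`, ties being broken by increasing index. -/
def rk (F : Fin n → ℕ) (w : Fin n) : ℕ :=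
  (univ.filter fun u => F w < F u ∨ (F u = F w ∧ u < w)).card

/-- Fixed points of a word: indices that sorting leaves in place and whose letter is a multiple
of `ℓ`. -/
def wfix (ℓ : ℕ) (F : Fin n → ℕ) : Finset (Fin n) :=
  univ.filter fun p => rk F p = p ∧ ℓ ∣ F p

lemma rk_lt_rk {F : Fin n → ℕ} {u w : Fin n} (h : F w < F u ∨ (F u = F w ∧ u < w)) :
    rk F u < rk F w := by
  apply Finset.card_lt_card
  rw [Finset.ssubset_iff_of_subset]
  · exact ⟨u, by simpa using h, by simp⟩
  · intro t ht
    simp only [mem_filter, mem_univ, true_and] at ht ⊢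
    omega

lemma rk_lt_rk_iff {F : Fin n → ℕ} {u w : Fin n} :
    rk F u < rk F w ↔ (F w < F u ∨ (F u = F w ∧ u < w)) := by
  refine ⟨fun h => ?_, rk_lt_rk⟩
  by_contra hc
  rcases eq_or_ne u w with rfl | hne
  · exact lt_irrefl _ h
  · have : F u < F w ∨ (F w = F u ∧ w < u) := by omega
    exact absurd (rk_lt_rk this) (by omega)

lemma rk_injective (F : Fin n → ℕ) : Function.Injective (rk F) := by
  intro u w h
  by_contra hne
  have : (F w < F u ∨ (F u = F w ∧ u < w)) ∨ (F u < F w ∨ (F w = F u ∧ w < u)) := by omega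
  rcases this with h' | h' <;> have := rk_lt_rk h' <;> omega

/-- A permutation listing the indices in sorted order is the inverse of `rk`. -/
lemma rk_apply_of_sorted {F : Fin n → ℕ} (s : Equiv.Perm (Fin n))
    (h : ∀ i j, i < j → F (s j) < F (s i) ∨ (F (s i) = F (s j) ∧ s i < s j)) (i : Fin n) :
    rk F (s i) = i := by
  have : (univ.filter fun u => F (s i) < F u ∨ (F u = F (s i) ∧ u < s i)) =
      (Iio i).map s.toEmbedding := by
    ext u
    obtain ⟨j, rfl⟩ := s.surjective u
    simp only [mem_filter, mem_univ, true_and, Finset.mem_map_equiv, Equiv.symm_apply_apply,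
      mem_Iio]
    rcases lt_trichotomy i j with hij | rfl | hij
    · have := h i j hij
      omega
    · omega
    · have := h j i hij
      omega
  rw [rk, this, card_map, Fin.card_Iio]

/-- The indicator of the descent set. -/
def dsc (σ : CP ℓ n) (j : ℕ) : ℕ := if j ∈ desSet σ then 1 else 0

/-- The partition `f` attached to `σ` and to gaps `a`: weakly decreasing, with
`f i - f (i + 1) = a i + [i is a descent]`. -/
def fpart (σ : CP ℓ n) (a : Fin n → ℕ) (i : ℕ) : ℕ :=
  ∑ j : Fin n, if i ≤ (j : ℕ) then a j + dsc σ j else 0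

/-- The word encoded by a coloured permutation and a sequence of gaps: the letter at index `σ i`
is `ℓ * f i` plus the colour at `i`, where `f = fpart σ a`. -/
def word (σ : CP ℓ n) (a : Fin n → ℕ) (v : Fin n) : ℕ :=
  ℓ * fpart σ a (σ.1.symm v) + (σ.2 (σ.1.symm v) : ℕ)

lemma fpart_step (σ : CP ℓ n) (a : Fin n → ℕ) (i : Fin n) :
    fpart σ a i = fpart σ a (i + 1) + (a i + dsc σ i) := by
  have : a i + dsc σ i = ∑ j : Fin n, if i = j then a j + dsc σ j else 0 := by simp
  rw [this, fpart, fpart, ← Finset.sum_add_distrib]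
  refine Finset.sum_congr rfl fun j _ => ?_
  rcases lt_trichotomy i j with hij | rfl | hij
  · have h1 : (i : ℕ) + 1 ≤ j := hij
    have h2 : (i : ℕ) ≤ j := by omega
    simp [h1, h2, hij.ne]
  · simp
  · have h1 : ¬ ((i : ℕ) + 1 ≤ j) := by omega
    have h2 : ¬ ((i : ℕ) ≤ j) := by omega
    simp [h1, h2, hij.ne']

lemma word_apply (σ : CP ℓ n) (a : Fin n → ℕ) (i : Fin n) :
    word σ a (σ.1 i) = ℓ * fpart σ a i + (σ.2 i : ℕ) := by
  simp [word]

lemma mem_desSet (σ : CP ℓ n) (i j : Fin n) (hij : (j : ℕ) = i + 1) :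
    (i : ℕ) ∈ desSet σ ↔
      ((σ.2 i : ℕ) < σ.2 j ∨ ((σ.2 i : ℕ) = σ.2 j ∧ σ.1 j < σ.1 i)) := by
  have h1 : (i : ℕ) < n - 1 := by omega
  have h2 : (i : ℕ) + 1 < n := by omega
  have h3 : (⟨(i : ℕ) + 1, h2⟩ : Fin n) = j := by ext; simp [hij]
  rw [desSet, mem_filter, mem_range]
  simp [h1, h2, letter, gtLetter, h3]

/-- Descents of `σ` force strict drops of the partition, so the word read along `σ` is sorted with
ties in increasing order of index. -/
lemma word_sorted (σ : CP ℓ n) (a : Fin n → ℕ) (i j : Fin n) (hij : i < j) :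
    word σ a (σ.1 j) < word σ a (σ.1 i) ∨
      (word σ a (σ.1 i) = word σ a (σ.1 j) ∧ σ.1 i < σ.1 j) := by
  have step : ∀ i j : Fin n, (j : ℕ) = i + 1 → word σ a (σ.1 j) < word σ a (σ.1 i) ∨
      (word σ a (σ.1 i) = word σ a (σ.1 j) ∧ σ.1 i < σ.1 j) := by
    intro i j hij
    rw [word_apply, word_apply, fpart_step σ a i, ← hij]
    have hc := (σ.2 j).isLt
    by_cases hd : (i : ℕ) ∈ desSet σ
    · simp only [dsc, hd, if_true]
      left
      nlinarith [Nat.zero_le (ℓ * a i)]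
    · simp only [dsc, hd, if_false]
      rw [mem_desSet σ i j hij] at hd
      have hne : σ.1 i ≠ σ.1 j := fun h => by
        have := σ.1.injective h
        omega
      have := Nat.zero_le (ℓ * a i)
      rw [mul_add, add_zero]
      omega
  obtain ⟨d, hd⟩ : ∃ d, (j : ℕ) = i + 1 + d := ⟨j - (i + 1), by omega⟩
  clear hij
  induction d generalizing j with
  | zero => exact step i j hd
  | succ d ih =>
    have h1 := ih ⟨i + 1 + d, by omega⟩ rfl
    have h2 := step ⟨i + 1 + d, by omega⟩ j (by simp; omega)
    omega

lemma rk_word (σ : CP ℓ n) (a : Fin n → ℕ) (i : Fin n) : rk (word σ a) (σ.1 i) = i :=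
  rk_apply_of_sorted σ.1 (word_sorted σ a) i

lemma wfix_word (σ : CP ℓ n) (a : Fin n → ℕ) : wfix ℓ (word σ a) = fixSet σ := by
  ext p
  obtain ⟨i, rfl⟩ := σ.1.surjective p
  have hc := (σ.2 i).isLt
  simp only [wfix, fixSet, mem_filter, mem_univ, true_and, rk_word, word_apply]
  rw [Nat.dvd_add_right (dvd_mul_right _ _), Fin.val_inj]
  constructor
  · rintro ⟨h1, h2⟩
    rw [← h1]
    exact ⟨h1.symm, Nat.eq_zero_of_dvd_of_lt h2 hc⟩
  · rintro ⟨h1, h2⟩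
    have := σ.1.injective h1
    rw [this] at h2
    exact ⟨this.symm, by simp [h2]⟩

lemma sum_word (σ : CP ℓ n) (a : Fin n → ℕ) :
    ∑ v, word σ a v = fmaj σ + ∑ j : Fin n, ℓ * ((j + 1) * a j) := by
  rw [← Equiv.sum_comp σ.1]
  simp only [word_apply, sum_add_distrib, ← mul_sum, fmaj, col]
  have h1 : ∑ i : Fin n, fpart σ a i = ∑ j : Fin n, ((j : ℕ) + 1) * (a j + dsc σ j) := by
    simp only [fpart]
    rw [sum_comm]
    refine sum_congr rfl fun j _ => ?_
    rw [← sum_filter, sum_const, smul_eq_mul]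
    congr 1
    have : (univ.filter fun x : Fin n => (x : ℕ) ≤ j) = Iic j := by
      ext x; simp
    rw [this, Fin.card_Iic]
  have h2 : ∑ j : Fin n, ((j : ℕ) + 1) * dsc σ j = maj σ := by
    rw [Fin.sum_univ_eq_sum_range (fun j => (j + 1) * dsc σ j)]
    simp only [dsc, mul_ite, mul_one, mul_zero, maj]
    rw [← sum_filter]
    refine sum_congr ?_ fun _ _ => rfl
    ext j
    have : j ∈ desSet σ → j < n := fun h => by
      rw [desSet, mem_filter, mem_range] at h
      omega
    simpa only [mem_filter, mem_range, and_iff_right_iff_imp] using this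
  rw [h1, ← h2]
  simp only [mul_add (_ + 1), sum_add_distrib]
  ring

/-- Inverse map: sorting the indices of a word recovers the permutation, residues modulo `ℓ` of
the letters are the colours, and quotients give the partition. -/
lemma word_bijective (hℓ : 1 ≤ ℓ) :
    Function.Bijective fun p : CP ℓ n × (Fin n → ℕ) => word p.1 p.2 := by
  constructor
  · rintro ⟨σ, a⟩ ⟨τ, b⟩ h
    simp only at h
    have h1 : σ.1 = τ.1 := by
      ext i : 1
      apply rk_injective (word σ a)
      rw [rk_word, h, rk_word]
    have hw : ∀ i : Fin n, ℓ * fpart σ a i + (σ.2 i : ℕ) = ℓ * fpart τ b i + (τ.2 i : ℕ) := by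
      intro i
      rw [← word_apply, ← word_apply, h, h1]
    have h2 : ∀ i, σ.2 i = τ.2 i := by
      intro i
      have := congrArg (· % ℓ) (hw i)
      simpa [Nat.add_mod, Nat.mod_eq_of_lt, Fin.val_inj] using this
    have hst : σ = τ := Prod.ext h1 (funext h2)
    subst hst
    have hf : ∀ i : Fin n, fpart σ a i = fpart σ b i := by
      intro i
      have := hw i
      have : ℓ * fpart σ a i = ℓ * fpart σ b i := by omega
      exact Nat.eq_of_mul_eq_mul_left hℓ this
    have hf' : ∀ i : ℕ, fpart σ a i = fpart σ b i := by
      intro i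
      by_cases hi : i < n
      · exact hf ⟨i, hi⟩
      · refine sum_congr rfl fun j _ => ?_
        have : ¬ i ≤ (j : ℕ) := by omega
        simp [this]
    refine Prod.ext rfl (funext fun i => ?_)
    have e1 := fpart_step σ a i
    have e2 := fpart_step σ b i
    rw [hf', hf'] at e1
    simp only
    omega
  · intro F
    -- `s` lists the indices by decreasing letter, ties in increasing order.
    obtain ⟨hs1, hs2⟩ := Tuple.eq_sort_iff.mp
      (rfl : Tuple.sort (fun i => OrderDual.toDual (F i)) = _)
    set s := Tuple.sort (fun i => OrderDual.toDual (F i)) with hs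
    have hlt : ∀ v, v % ℓ < ℓ := fun v => Nat.mod_lt _ hℓ
    let σ : CP ℓ n := (s, fun i => ⟨F (s i) % ℓ, hlt _⟩)
    let f : ℕ → ℕ := fun i => if h : i < n then F (s ⟨i, h⟩) / ℓ else 0
    have hanti : ∀ i j : Fin n, i ≤ j → F (s j) ≤ F (s i) := fun i j hij => hs1 hij
    have hf : ∀ i : Fin n, f (i + 1) + dsc σ i ≤ f i := by
      intro i
      have hfi : f i = F (s i) / ℓ := by simp [f]
      by_cases hi : (i : ℕ) + 1 < n
      · have hfj : f (i + 1) = F (s ⟨i + 1, hi⟩) / ℓ := by simp [f, hi]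
        have hle := hanti i ⟨i + 1, hi⟩ (by rw [Fin.le_def]; simp)
        have hdiv := Nat.div_le_div_right (c := ℓ) hle
        have hd := mem_desSet σ i ⟨i + 1, hi⟩ rfl
        by_cases hdes : (i : ℕ) ∈ desSet σ
        · simp only [dsc, hdes, if_true, hfi, hfj]
          by_contra hcon
          have heq : F (s i) / ℓ = F (s ⟨i + 1, hi⟩) / ℓ := by omega
          have m1 := Nat.div_add_mod (F (s i)) ℓ
          have m2 := Nat.div_add_mod (F (s ⟨i + 1, hi⟩)) ℓ
          rw [heq] at m1
          rw [hd] at hdes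
          simp only [σ] at hdes
          rcases hdes with h | ⟨h, h'⟩
          · omega
          · have := hs2 i ⟨i + 1, hi⟩ (by rw [Fin.lt_def]; simp)
              (congrArg OrderDual.toDual (by omega))
            omega
        · simp only [dsc, hdes, if_false, hfi, hfj]
          omega
      · have : (i : ℕ) ∉ desSet σ := by
          rw [desSet, mem_filter, mem_range]
          omega
        simp [f, hi, dsc, this]
    let a : Fin n → ℕ := fun i => f i - f (i + 1) - dsc σ i
    have hfp : ∀ d i, i + d = n → fpart σ a i = f i := by
      intro d
      induction d with
      | zero =>
        intro i hi
        have h0 : f i = 0 := by simp [f]; omega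
        rw [h0]
        refine sum_eq_zero fun j _ => ?_
        have : ¬ i ≤ (j : ℕ) := by omega
        simp [this]
      | succ d ih =>
        intro i hi
        have h1 := fpart_step σ a ⟨i, by omega⟩
        have h2 := hf ⟨i, by omega⟩
        simp only at h1 h2
        rw [h1, ih (i + 1) (by omega)]
        simp only [a]
        omega
    refine ⟨(σ, a), funext fun v => ?_⟩
    obtain ⟨i, rfl⟩ := s.surjective v
    have := word_apply σ a i
    rw [hfp (n - i) i (by omega)] at this
    simp only
    change word σ a (σ.1 i) = _
    rw [this]
    simp only [f, i.isLt, dif_pos, σ]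
    exact Nat.div_add_mod _ _

end FixMaj

/-! ### Inserting fixed points into words -/

namespace FixMaj

variable {ℓ n : ℕ}

lemma insertNth_eq (p : Fin (n + 1)) (v : ℕ) (W : Fin n → ℕ) (i : Fin (n + 1)) :
    (p.insertNth v W : Fin (n + 1) → ℕ) i =
      if h : (i : ℕ) < p then W ⟨i, by omega⟩ else
        if h' : i = p then v else W ⟨i - 1, by omega⟩ := by
  split_ifs with h h'
  · rw [Fin.insertNth_apply_below h, eq_rec_constant]
    rfl
  · subst h'
    simp
  · rw [Fin.insertNth_apply_above (by omega), eq_rec_constant]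
    rfl

/-- Inserting `v` at either end of a stretch of letters `v` yields the same word. -/
lemma insertNth_eq_of_const {p p' : Fin (n + 1)} (hp : p ≤ p') (v : ℕ) (W : Fin n → ℕ)
    (h : ∀ w : Fin n, (p : ℕ) ≤ w → (w : ℕ) < p' → W w = v) :
    (p.insertNth v W : Fin (n + 1) → ℕ) = p'.insertNth v W := by
  funext i
  rw [insertNth_eq, insertNth_eq]
  split_ifs with h1 h2 h3 h4 h5 h6 h7 h8 <;> first | rfl | omega | skip
  · exact (h ⟨i, by omega⟩ (by simp; omega) (by simp; omega)).symm
  · rw [h ⟨i, by omega⟩ (by simp; omega) (by simp; omega),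
      h ⟨i - 1, by omega⟩ (by simp; omega) (by simp; omega)]
  · exact h ⟨i - 1, by omega⟩ (by simp; omega) (by simp; omega)

/-- Deleting either end of a constant stretch yields the same word. -/
lemma removeNth_eq_of_const {p p' : Fin (n + 1)} (hp : p ≤ p') (v : ℕ) (F : Fin (n + 1) → ℕ)
    (h : ∀ w : Fin (n + 1), p ≤ w → w ≤ p' → F w = v) :
    p.removeNth F = p'.removeNth F := by
  funext w
  simp only [Fin.removeNth, Fin.succAbove, Fin.lt_def, Fin.val_castSucc]
  split_ifs with h1 h2 h3
  · rfl
  · omega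
  · rw [h w.succ (by rw [Fin.le_def]; simp; omega) (by rw [Fin.le_def]; simp; omega),
      h w.castSucc (by rw [Fin.le_def]; simp; omega) (by rw [Fin.le_def]; simp; omega)]
  · rfl

/-- Deleting the letter at `p` lowers by one the ranks above that of `p` and keeps the others. -/
lemma rk_succAbove (F : Fin (n + 1) → ℕ) (p : Fin (n + 1)) (w : Fin n) :
    rk F (p.succAbove w) = rk (p.removeNth F) w + if rk F p < rk F (p.succAbove w) then 1 else 0 := by
  simp only [rk_lt_rk_iff]
  rw [rk, rk, card_filter, card_filter, Fin.sum_univ_succAbove _ p, add_comm]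
  simp only [Fin.removeNth, Fin.succAbove_lt_succAbove_iff]
  congr!

/-- Deleting a fixed point neither creates nor destroys other fixed points. -/
lemma mem_wfix_succAbove {F : Fin (n + 1) → ℕ} {p : Fin (n + 1)} (hp : rk F p = p) (w : Fin n) :
    p.succAbove w ∈ wfix ℓ F ↔ w ∈ wfix ℓ (p.removeNth F) := by
  have h1 := rk_succAbove F p w
  have hne : rk F (p.succAbove w) ≠ rk F p := fun h =>
    Fin.succAbove_ne p w (rk_injective F h)
  rw [hp] at h1 hne
  simp only [wfix, mem_filter, mem_univ, true_and]
  refine and_congr ?_ Iff.rfl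
  have h2 : ((p.succAbove w : Fin (n + 1)) : ℕ) = w + if (p : ℕ) ≤ w then 1 else 0 := by
    simp only [Fin.succAbove, Fin.lt_def, Fin.val_castSucc]
    split_ifs <;> simp <;> omega
  split_ifs at h1 h2 <;> omega

lemma wfix_eq_insert {F : Fin (n + 1) → ℕ} {p : Fin (n + 1)} (hp : p ∈ wfix ℓ F) :
    wfix ℓ F = insert p ((wfix ℓ (p.removeNth F)).map p.succAboveEmb) := by
  have hp' : rk F p = p := by
    simp only [wfix, mem_filter] at hp
    exact hp.2.1
  ext w
  rcases Fin.eq_self_or_eq_succAbove p w with rfl | ⟨w, rfl⟩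
  · simp [hp]
  · rw [mem_wfix_succAbove hp', mem_insert]
    simp [Fin.succAbove_ne]

lemma card_wfix_of_mem {F : Fin (n + 1) → ℕ} {p : Fin (n + 1)} (hp : p ∈ wfix ℓ F) :
    (wfix ℓ F).card = (wfix ℓ (p.removeNth F)).card + 1 := by
  rw [wfix_eq_insert hp, card_insert_of_notMem, card_map]
  simp [Fin.succAbove_ne]

/-- The words with exactly `k` fixed points, all of them carrying letters at least `ℓ * M`. -/
def Good (ℓ k M : ℕ) (F : Fin n → ℕ) : Prop :=
  (wfix ℓ F).card = k ∧ ∀ p ∈ wfix ℓ F, ℓ * M ≤ F p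

/-- All letters between two fixed points with the same letter are equal to it. -/
lemma const_of_fixed {F : Fin n → ℕ} {p p' : Fin n} (hpp : p ≤ p') (hp : rk F p = p)
    (hp' : rk F p' = p') (hF : F p = F p') (w : Fin n) (h1 : p ≤ w) (h2 : w ≤ p') :
    F w = F p := by
  -- The indices sorted before `p'` but not before `p` are those in `[p, p')` with letter `F p`.
  have hsub : (univ.filter fun u => F p < F u ∨ (F u = F p ∧ u < p)) ⊆
      (univ.filter fun u => F p' < F u ∨ (F u = F p' ∧ u < p')) := by
    intro u
    simp only [mem_filter, mem_univ, true_and]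
    omega
  have hcard := card_sdiff_of_subset hsub
  change _ = rk F p' - rk F p at hcard
  have heq : (univ.filter fun u => F p' < F u ∨ (F u = F p' ∧ u < p')) \
      (univ.filter fun u => F p < F u ∨ (F u = F p ∧ u < p)) =
      (Ico p p').filter fun u => F u = F p := by
    ext u
    simp only [mem_sdiff, mem_filter, mem_univ, true_and, mem_Ico]
    omega
  rw [heq, hp, hp', ← Fin.card_Ico] at hcard
  rcases eq_or_lt_of_le h2 with rfl | h2
  · exact hF.symm
  · exact (card_filter_eq_iff.mp hcard) w (mem_Ico.mpr ⟨h1, h2⟩)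

/-- The rank of a letter `v` inserted at position `p` of the word `W`. -/
def insRk (W : Fin n → ℕ) (v p : ℕ) : ℕ :=
  (univ.filter fun w => v < W w ∨ (W w = v ∧ (w : ℕ) < p)).card

lemma rk_insertNth (p : Fin (n + 1)) (v : ℕ) (W : Fin n → ℕ) :
    rk (p.insertNth v W : Fin (n + 1) → ℕ) p = insRk W v p := by
  have h : ∀ x : Fin n, ((p.succAbove x : Fin (n + 1)) : ℕ) < p ↔ (x : ℕ) < p := fun x =>
    Fin.succAbove_lt_iff_castSucc_lt p x
  rw [rk, insRk, card_filter, card_filter, Fin.sum_univ_succAbove _ p]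
  simp only [Fin.insertNth_apply_same, Fin.insertNth_apply_succAbove, lt_irrefl, and_false,
    or_false, if_false, zero_add, Fin.lt_def, h]

lemma insRk_mono (W : Fin n → ℕ) (v : ℕ) {p p' : ℕ} (h : p ≤ p') : insRk W v p ≤ insRk W v p' := by
  refine card_le_card fun w => ?_
  simp only [mem_filter, mem_univ, true_and]
  omega

lemma exists_insert (W : Fin n → ℕ) (v : ℕ) :
    ∃ p : Fin (n + 1), rk (p.insertNth v W : Fin (n + 1) → ℕ) p = p := by
  -- The least `p` with `insRk W v p ≤ p` works.
  have hn : insRk W v n ≤ n := (card_le_univ _).trans_eq (Fintype.card_fin n)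
  have hex : ∃ p, insRk W v p ≤ p := ⟨n, hn⟩
  classical
  have hle : Nat.find hex ≤ n := Nat.find_min' hex hn
  refine ⟨⟨Nat.find hex, by omega⟩, ?_⟩
  rw [rk_insertNth]
  refine le_antisymm (Nat.find_spec hex) ?_
  simp only
  by_contra hlt
  obtain ⟨r, hr⟩ : ∃ r, Nat.find hex = r + 1 := ⟨Nat.find hex - 1, by omega⟩
  have h1 := Nat.find_min hex (m := r) (by omega)
  have h2 := insRk_mono W v (Nat.le_succ r)
  rw [hr] at hlt
  simp only [Nat.succ_eq_add_one] at h2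
  omega

/-- A letter can be inserted as a fixed point in only one way, up to the resulting word. -/
lemma insert_unique_aux (W : Fin n → ℕ) (v : ℕ) {p p' : Fin (n + 1)} (hpp : p ≤ p')
    (hp : rk (p.insertNth v W : Fin (n + 1) → ℕ) p = p)
    (hp' : rk (p'.insertNth v W : Fin (n + 1) → ℕ) p' = p') :
    (p.insertNth v W : Fin (n + 1) → ℕ) = p'.insertNth v W := by
  rw [rk_insertNth] at hp hp'
  refine insertNth_eq_of_const hpp v W ?_
  have hsub : (univ.filter fun w => v < W w ∨ (W w = v ∧ (w : ℕ) < p)) ⊆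
      (univ.filter fun w => v < W w ∨ (W w = v ∧ (w : ℕ) < p')) := by
    intro u
    simp only [mem_filter, mem_univ, true_and]
    omega
  have hcard := card_sdiff_of_subset hsub
  change _ = insRk W v p' - insRk W v p at hcard
  have heq : (univ.filter fun w => v < W w ∨ (W w = v ∧ (w : ℕ) < p')) \
      (univ.filter fun w => v < W w ∨ (W w = v ∧ (w : ℕ) < p)) =
      (univ.filter fun w : Fin n => (p : ℕ) ≤ w ∧ (w : ℕ) < p').filter fun u => W u = v := by
    ext u
    simp only [mem_sdiff, mem_filter, mem_univ, true_and]
    omega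
  have hI : (univ.filter fun w : Fin n => (p : ℕ) ≤ w ∧ (w : ℕ) < p').card = p' - p := by
    rw [← Nat.card_Ico, ← card_map Fin.valEmbedding]
    congr 1
    ext x
    simp only [mem_map, mem_filter, mem_univ, true_and, Fin.valEmbedding_apply, mem_Ico]
    constructor
    · rintro ⟨a, h, rfl⟩
      exact h
    · intro h
      exact ⟨⟨x, by omega⟩, h, rfl⟩
  rw [heq, hp, hp', ← hI] at hcard
  intro w h1 h2
  exact (card_filter_eq_iff.mp hcard) w (by simp [h1, h2])

/-- The word obtained from `W` by inserting the letter `v` as a fixed point. -/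
noncomputable def ins (v : ℕ) (W : Fin n → ℕ) : Fin (n + 1) → ℕ :=
  (exists_insert W v).choose.insertNth v W

lemma ins_spec (v : ℕ) (W : Fin n → ℕ) :
    ∃ p : Fin (n + 1), rk (ins v W) p = p ∧ ins v W p = v ∧ p.removeNth (ins v W) = W :=
  ⟨_, (exists_insert W v).choose_spec, by simp [ins], by simp [ins]⟩

lemma ins_removeNth {F : Fin (n + 1) → ℕ} {p : Fin (n + 1)} (hp : rk F p = p) :
    ins (F p) (p.removeNth F) = F := by
  have h1 := (exists_insert (p.removeNth F) (F p)).choose_spec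
  have h2 : rk (p.insertNth (F p) (p.removeNth F) : Fin (n + 1) → ℕ) p = p := by simpa using hp
  have h3 : (p.insertNth (F p) (p.removeNth F) : Fin (n + 1) → ℕ) = F := by simp
  refine Eq.trans ?_ h3
  rcases le_total p (exists_insert (p.removeNth F) (F p)).choose with h | h
  · exact (insert_unique_aux _ _ h h2 h1).symm
  · exact insert_unique_aux _ _ h h1 h2

lemma good_ins {k M u : ℕ} {W : Fin n → ℕ} (hW : Good ℓ k (M + u) W) :
    Good ℓ (k + 1) M (ins (ℓ * (M + u)) W) ∧
      (∀ p ∈ wfix ℓ (ins (ℓ * (M + u)) W), ℓ * (M + u) ≤ ins (ℓ * (M + u)) W p) := by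
  obtain ⟨p, h1, h2, h3⟩ := ins_spec (ℓ * (M + u)) W
  set F := ins (ℓ * (M + u)) W with hF
  have hp : p ∈ wfix ℓ F := by simp [wfix, h1, h2]
  have hmin : ∀ p ∈ wfix ℓ F, ℓ * (M + u) ≤ F p := by
    intro r hr
    rcases Fin.eq_self_or_eq_succAbove p r with rfl | ⟨w, rfl⟩
    · rw [h2]
    · rw [mem_wfix_succAbove h1, h3] at hr
      have := hW.2 w hr
      rwa [← h3] at this
  refine ⟨⟨by rw [card_wfix_of_mem hp, h3, hW.1], fun r hr => ?_⟩, hmin⟩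
  have := hmin r hr
  nlinarith [Nat.zero_le (ℓ * u)]

lemma ins_injective (hℓ : 1 ≤ ℓ) {k M u u' : ℕ} {W W' : Fin n → ℕ} (hW : Good ℓ k (M + u) W)
    (hW' : Good ℓ k (M + u') W') (h : ins (ℓ * (M + u)) W = ins (ℓ * (M + u')) W') :
    u = u' ∧ W = W' := by
  obtain ⟨p, h1, h2, h3⟩ := ins_spec (ℓ * (M + u)) W
  obtain ⟨p', h1', h2', h3'⟩ := ins_spec (ℓ * (M + u')) W'
  have g1 := (good_ins hW).2
  have g2 := (good_ins hW').2
  rw [← h] at h1' h2' h3' g2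
  set F := ins (ℓ * (M + u)) W with hF
  have hp : p ∈ wfix ℓ F := by simp [wfix, h1, h2]
  have hp' : p' ∈ wfix ℓ F := by simp [wfix, h1', h2']
  have e1 := g1 p' hp'
  have e2 := g2 p hp
  rw [h2'] at e1
  rw [h2] at e2
  have heq : M + u = M + u' := Nat.eq_of_mul_eq_mul_left hℓ (le_antisymm e1 e2)
  refine ⟨by omega, ?_⟩
  have hFF : F p = F p' := by rw [h2, h2', heq]
  rw [← h3, ← h3']
  rcases le_total p p' with hl | hl
  · exact removeNth_eq_of_const hl (F p) F (const_of_fixed hl h1 h1' hFF)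
  · exact (removeNth_eq_of_const hl (F p') F (const_of_fixed hl h1' h1 hFF.symm)).symm

/-- Deleting the smallest letter carried by a fixed point inverts `ins`. -/
lemma exists_ins_eq (hℓ : 1 ≤ ℓ) {k M : ℕ} {F : Fin (n + 1) → ℕ} (hF : Good ℓ (k + 1) M F) :
    ∃ u, ∃ W : Fin n → ℕ, Good ℓ k (M + u) W ∧ ins (ℓ * (M + u)) W = F := by
  have hne : (wfix ℓ F).Nonempty := card_pos.mp (by rw [hF.1]; omega)
  obtain ⟨p, hp, hmin⟩ := exists_min_image (wfix ℓ F) F hne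
  have hp' := hp
  simp only [wfix, mem_filter, mem_univ, true_and] at hp'
  obtain ⟨hrk, c, hc⟩ := hp'
  have hM := hF.2 p hp
  rw [hc] at hM
  have hM' : M ≤ c := Nat.le_of_mul_le_mul_left hM hℓ
  have hcu : M + (c - M) = c := by omega
  refine ⟨c - M, p.removeNth F, ⟨?_, fun w hw => ?_⟩, ?_⟩
  · have := card_wfix_of_mem hp
    rw [hF.1] at this
    omega
  · rw [hcu, ← hc]
    exact hmin _ ((mem_wfix_succAbove hrk w).mpr hw)
  · rw [hcu, ← hc]
    exact ins_removeNth hrk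

lemma sum_ins (v : ℕ) (W : Fin n → ℕ) : ∑ i, ins v W i = v + ∑ i, W i := by
  obtain ⟨p, -, h2, h3⟩ := ins_spec v W
  rw [Fin.sum_univ_succAbove _ p, h2]
  congr 1
  nth_rewrite 2 [← h3]
  rfl

end FixMaj

/-! ### Generating functions of words -/

namespace FixMaj

open CP ENNReal

variable {ℓ n : ℕ}

lemma tsum_pi_geometric : ∀ (n : ℕ) (c : Fin n → ℝ≥0∞),
    ∑' a : Fin n → ℕ, ∏ j, c j ^ a j = ∏ j, (1 - c j)⁻¹
  | 0, c => by
    rw [tsum_eq_single (fun i => 0) (fun b hb => (hb (Subsingleton.elim _ _)).elim)]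
    simp
  | n + 1, c => by
    rw [← (Fin.consEquiv fun _ : Fin (n + 1) => ℕ).tsum_eq, ENNReal.tsum_prod']
    simp only [Fin.consEquiv_apply, Fin.prod_univ_succ, Fin.cons_zero, Fin.cons_succ,
      ENNReal.tsum_mul_left, ENNReal.tsum_mul_right, ENNReal.tsum_geometric,
      tsum_pi_geometric n]

/-- `1 / ((1 - q^ℓ)(1 - q^{2ℓ}) ⋯ (1 - q^{nℓ}))`. -/
noncomputable def ipoch (ℓ : ℕ) (q : ℝ≥0∞) (n : ℕ) : ℝ≥0∞ :=
  ∏ i ∈ range n, (1 - (q ^ ℓ) ^ (i + 1))⁻¹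

/-- Words of length `n`, weighted by `q` to the sum of letters and by a function of the number of
fixed points, are counted by coloured permutations and `fmaj`. -/
lemma tsum_words (hℓ : 1 ≤ ℓ) (q : ℝ≥0∞) (w : ℕ → ℝ≥0∞) :
    ∑' F : Fin n → ℕ, w (wfix ℓ F).card * q ^ (∑ i, F i) =
      (∑ σ : CP ℓ n, w (fix σ) * q ^ fmaj σ) * ipoch ℓ q n := by
  rw [← (Equiv.ofBijective _ (word_bijective hℓ)).tsum_eq, ENNReal.tsum_prod', tsum_fintype,
    sum_mul]
  refine sum_congr rfl fun σ _ => ?_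
  have hprod : ∀ a : Fin n → ℕ, q ^ (∑ j : Fin n, ℓ * (((j : ℕ) + 1) * a j)) =
      ∏ j : Fin n, ((q ^ ℓ) ^ ((j : ℕ) + 1)) ^ a j := by
    intro a
    rw [← prod_pow_eq_pow_sum]
    refine prod_congr rfl fun j _ => ?_
    rw [← pow_mul, ← pow_mul]
  simp only [Equiv.ofBijective_apply, wfix_word, sum_word, pow_add, hprod]
  simp only [← mul_assoc, ENNReal.tsum_mul_left, tsum_pi_geometric, ipoch, fix]
  simp only [pow_add]
  rw [Fin.prod_univ_eq_prod_range (fun j => (1 - (q ^ ℓ) ^ j * (q ^ ℓ) ^ 1)⁻¹)]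

lemma tsum_words_total (q : ℝ≥0∞) :
    ∑' F : Fin n → ℕ, q ^ (∑ i, F i) = ((1 - q)⁻¹) ^ n := by
  simp only [← prod_pow_eq_pow_sum]
  rw [tsum_pi_geometric n (fun _ => q)]
  simp

open Classical in
/-- Generating function of the words of length `n` satisfying `Good ℓ k M`. -/
noncomputable def goodGF (ℓ n k M : ℕ) (q : ℝ≥0∞) : ℝ≥0∞ :=
  ∑' F : Fin n → ℕ, if Good ℓ k M F then q ^ (∑ i, F i) else 0

/-- Splitting off the smallest letter `ℓ * (M + u)` carried by a fixed point. -/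
lemma goodGF_succ (hℓ : 1 ≤ ℓ) (n k M : ℕ) (q : ℝ≥0∞) :
    goodGF ℓ (n + 1) (k + 1) M q = ∑' u, q ^ (ℓ * (M + u)) * goodGF ℓ n k (M + u) q := by
  classical
  simp only [goodGF, ← ENNReal.tsum_mul_left]
  rw [← ENNReal.tsum_prod]
  have hsupp : ∀ x : Function.support (fun p : ℕ × (Fin n → ℕ) =>
      q ^ (ℓ * (M + p.1)) * if Good ℓ k (M + p.1) p.2 then q ^ (∑ i, p.2 i) else 0),
      Good ℓ k (M + x.1.1) x.1.2 := by
    rintro ⟨x, hx⟩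
    by_contra h
    simp [h] at hx
  refine tsum_eq_tsum_of_ne_zero_bij (fun x => ins (ℓ * (M + x.1.1)) x.1.2) ?_ ?_ ?_
  · rintro x y hxy
    obtain ⟨h1, h2⟩ := ins_injective hℓ (hsupp x) (hsupp y) hxy
    exact Subtype.ext (Prod.ext h1 h2)
  · intro F hF
    have hg : Good ℓ (k + 1) M F := by
      by_contra h
      simp [h] at hF
    obtain ⟨u, W, hW, rfl⟩ := exists_ins_eq hℓ hg
    refine ⟨⟨(u, W), ?_⟩, rfl⟩
    simp only [Function.mem_support, hg, if_true, hW, sum_ins] at hF ⊢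
    rwa [pow_add] at hF
  · intro x
    simp only [(good_ins (hsupp x)).1, hsupp x, if_true, sum_ins, pow_add]

lemma goodGF_zero (n M : ℕ) (q : ℝ≥0∞) : goodGF ℓ n 0 M q = goodGF ℓ n 0 0 q := by
  simp only [goodGF]
  congr! 3 with F
  constructor
  · exact fun h => ⟨h.1, by simp⟩
  · intro h
    refine ⟨h.1, ?_⟩
    simp [card_eq_zero.mp h.1]

/-- Iterating `goodGF_succ`: the letters of the fixed points form a partition into `k` parts, each
at least `M`, independent of the fixed-point-free word that remains. -/
lemma goodGF_eq (hℓ : 1 ≤ ℓ) (n k M : ℕ) (q : ℝ≥0∞) :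
    goodGF ℓ (n + k) k M q = (q ^ ℓ) ^ (M * k) * (goodGF ℓ n 0 0 q * ipoch ℓ q k) := by
  induction k generalizing M with
  | zero => simp [goodGF_zero, ipoch]
  | succ k ih =>
    rw [← add_assoc, goodGF_succ hℓ]
    have : ∀ u, q ^ (ℓ * (M + u)) * goodGF ℓ (n + k) k (M + u) q =
        ((q ^ ℓ) ^ (M * (k + 1)) * (goodGF ℓ n 0 0 q * ipoch ℓ q k)) *
          ((q ^ ℓ) ^ (k + 1)) ^ u := by
      intro u
      rw [ih]
      ring
    simp only [this, ENNReal.tsum_mul_left, ENNReal.tsum_geometric, ipoch, prod_range_succ]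
    ring

lemma goodGF_eq_sum (hℓ : 1 ≤ ℓ) (n k : ℕ) (q : ℝ≥0∞) :
    goodGF ℓ n k 0 q =
      (∑ σ : CP ℓ n with fix σ = k, q ^ fmaj σ) * ipoch ℓ q n := by
  have := tsum_words (n := n) hℓ q (fun j => if j = k then 1 else 0)
  simp only [ite_mul, one_mul, zero_mul, ← sum_filter] at this
  rw [← this, goodGF]
  congr! 2 with F
  simp [Good]

end FixMaj

/-! ### The distribution of `fmaj` and `fix` -/

namespace FixMaj

open CP

variable {ℓ n : ℕ}

/-- `(1 - q^ℓ)(1 - q^{2ℓ}) ⋯ (1 - q^{nℓ})`. -/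
noncomputable def poch (ℓ : ℕ) (q : ℝ) (n : ℕ) : ℝ := ∏ i ∈ range n, (1 - (q ^ ℓ) ^ (i + 1))

/-- Generating function of `fmaj` over coloured permutations with exactly `k` fixed points. -/
noncomputable def fixGF (ℓ : ℕ) (q : ℝ) (n k : ℕ) : ℝ := ∑ σ : CP ℓ n with fix σ = k, q ^ fmaj σ

lemma pow_lt_one_aux {q : ℝ} (h0 : 0 < q) (h1 : q < 1) (hℓ : 1 ≤ ℓ) (i : ℕ) :
    (q ^ ℓ) ^ (i + 1) < 1 :=
  pow_lt_one₀ (by positivity) (pow_lt_one₀ h0.le h1 (by omega)) (by omega)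

lemma poch_pos {q : ℝ} (h0 : 0 < q) (h1 : q < 1) (hℓ : 1 ≤ ℓ) (n : ℕ) : 0 < poch ℓ q n :=
  prod_pos fun i _ => sub_pos.mpr (pow_lt_one_aux h0 h1 hℓ i)

lemma poch_succ (q : ℝ) (n : ℕ) :
    poch ℓ q (n + 1) = poch ℓ q n * (1 - (q ^ ℓ) ^ (n + 1)) := prod_range_succ _ _

lemma ipoch_ofReal {q : ℝ} (h0 : 0 < q) (h1 : q < 1) (hℓ : 1 ≤ ℓ) (n : ℕ) :
    ipoch ℓ (ENNReal.ofReal q) n = ENNReal.ofReal (poch ℓ q n)⁻¹ := by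
  rw [ipoch, poch, ← prod_inv_distrib, ENNReal.ofReal_prod_of_nonneg]
  · refine prod_congr rfl fun i _ => ?_
    have := pow_lt_one_aux h0 h1 hℓ i
    rw [ENNReal.ofReal_inv_of_pos (by linarith), ENNReal.ofReal_sub _ (by positivity),
      ENNReal.ofReal_one, ENNReal.ofReal_pow (by positivity), ENNReal.ofReal_pow h0.le]
  · intro i _
    have := pow_lt_one_aux h0 h1 hℓ i
    exact inv_nonneg.mpr (by linarith)

lemma goodGF_ofReal {q : ℝ} (h0 : 0 < q) (h1 : q < 1) (hℓ : 1 ≤ ℓ) (n k : ℕ) :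
    goodGF ℓ n k 0 (ENNReal.ofReal q) = ENNReal.ofReal (fixGF ℓ q n k * (poch ℓ q n)⁻¹) := by
  rw [goodGF_eq_sum hℓ, ipoch_ofReal h0 h1 hℓ, fixGF,
    ENNReal.ofReal_mul (sum_nonneg fun _ _ => by positivity),
    ENNReal.ofReal_sum_of_nonneg (fun _ _ => by positivity)]
  simp only [ENNReal.ofReal_pow h0.le]

lemma fixGF_nonneg {q : ℝ} (h0 : 0 < q) (n k : ℕ) : 0 ≤ fixGF ℓ q n k :=
  sum_nonneg fun _ _ => by positivity

/-- Inserting `k` fixed points in derangements: up to the normalisation by `poch`, the generating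
function factors. -/
lemma fixGF_eq {q : ℝ} (h0 : 0 < q) (h1 : q < 1) (hℓ : 1 ≤ ℓ) (m k : ℕ) :
    fixGF ℓ q (m + k) k / poch ℓ q (m + k) =
      fixGF ℓ q m 0 / poch ℓ q m * (1 / poch ℓ q k) := by
  have h := goodGF_eq hℓ m k 0 (ENNReal.ofReal q)
  have hp := fun n => (poch_pos h0 h1 hℓ n).le
  have hf := fun n k => fixGF_nonneg (ℓ := ℓ) h0 n k
  have hr : 0 ≤ fixGF ℓ q m 0 * (poch ℓ q m)⁻¹ := mul_nonneg (hf _ _) (inv_nonneg.mpr (hp _))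
  rw [goodGF_ofReal h0 h1 hℓ, goodGF_ofReal h0 h1 hℓ, ipoch_ofReal h0 h1 hℓ, zero_mul, pow_zero,
    one_mul, ← ENNReal.ofReal_mul hr, ENNReal.ofReal_eq_ofReal_iff
      (mul_nonneg (hf _ _) (inv_nonneg.mpr (hp _))) (mul_nonneg hr (inv_nonneg.mpr (hp _)))] at h
  simpa only [div_eq_mul_inv, one_mul] using h

/-- The distribution of `fmaj` on the whole group. -/
lemma fmaj_total {q : ℝ} (h0 : 0 < q) (h1 : q < 1) (hℓ : 1 ≤ ℓ) (n : ℕ) :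
    (∑ σ : CP ℓ n, q ^ fmaj σ) / poch ℓ q n = ((1 - q)⁻¹) ^ n := by
  have h := tsum_words (n := n) hℓ (ENNReal.ofReal q) (fun _ => 1)
  simp only [one_mul] at h
  have hs : ∑ σ : CP ℓ n, ENNReal.ofReal q ^ fmaj σ =
      ENNReal.ofReal (∑ σ : CP ℓ n, q ^ fmaj σ) := by
    rw [ENNReal.ofReal_sum_of_nonneg (fun _ _ => by positivity)]
    simp only [ENNReal.ofReal_pow h0.le]
  have hinv : (0 : ℝ) ≤ (1 - q)⁻¹ := inv_nonneg.mpr (by linarith)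
  have hp := (poch_pos h0 h1 hℓ n).le
  have hsum : 0 ≤ ∑ σ : CP ℓ n, q ^ fmaj σ := sum_nonneg fun _ _ => by positivity
  rw [tsum_words_total, hs, ipoch_ofReal h0 h1 hℓ, ← ENNReal.ofReal_one,
    ← ENNReal.ofReal_sub _ h0.le, ← ENNReal.ofReal_inv_of_pos (by linarith),
    ← ENNReal.ofReal_pow hinv, ← ENNReal.ofReal_mul hsum, ENNReal.ofReal_eq_ofReal_iff
      (pow_nonneg hinv _) (mul_nonneg hsum (inv_nonneg.mpr hp))] at h
  rw [div_eq_mul_inv, h]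

lemma fix_le (σ : CP ℓ n) : fix σ ≤ n := (card_le_univ _).trans_eq (Fintype.card_fin n)

/-- Grouping coloured permutations by their number of fixed points. -/
lemma sum_by_fix (w : CP ℓ n → ℝ) (x : ℝ) :
    ∑ σ : CP ℓ n, w σ * x ^ fix σ =
      ∑ p ∈ antidiagonal n, (∑ σ : CP ℓ n with fix σ = p.2, w σ) * x ^ p.2 := by
  rw [← sum_fiberwise_of_maps_to (s := univ) (t := antidiagonal n)
    (g := fun σ : CP ℓ n => (n - fix σ, fix σ))]
  · refine sum_congr rfl fun p hp => ?_
    rw [sum_mul]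
    have hp := mem_antidiagonal.mp hp
    refine sum_congr ?_ fun σ hσ => ?_
    · ext σ
      simp only [mem_filter, mem_univ, true_and, Prod.ext_iff]
      omega
    · rw [(mem_filter.mp hσ).2]
  · intro σ _
    have := fix_le σ
    simp only [Finset.HasAntidiagonal.mem_antidiagonal]
    omega

/-- `(x - 1)(x - q^ℓ) ⋯ (x - q^{ℓ(k-1)})`. -/
noncomputable def fall (ℓ : ℕ) (q x : ℝ) (k : ℕ) : ℝ := ∏ i ∈ range k, (x - q ^ (ℓ * i))

/-- The `q`-binomial theorem in the form
`∑_{j+k=n} (x-1)⋯(x-q^{ℓ(j-1)}) / ((q^ℓ)_j (q^ℓ)_k) = x^n / (q^ℓ)_n`. -/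
lemma cauchy {q : ℝ} (h0 : 0 < q) (h1 : q < 1) (hℓ : 1 ≤ ℓ) (x : ℝ) (n : ℕ) :
    ∑ p ∈ antidiagonal n, fall ℓ q x p.1 / poch ℓ q p.1 * (1 / poch ℓ q p.2) =
      x ^ n / poch ℓ q n := by
  have hp := fun n => (poch_pos h0 h1 hℓ n).ne'
  have hs : ∀ n, (1 - (q ^ ℓ) ^ (n + 1)) ≠ 0 := fun n =>
    (sub_pos.mpr (pow_lt_one_aux h0 h1 hℓ n)).ne'
  induction n with
  | zero => simp [fall, poch]
  | succ n ih =>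
    rw [poch_succ, ← div_div, eq_div_iff (hs n), pow_succ' x n, mul_div_assoc, ← ih]
    -- `1 - Q^{j+k} = (1 - Q^j) + Q^j (1 - Q^k)`; each summand lowers one of the two indices.
    have hsplit : ∀ p ∈ antidiagonal (n + 1),
        fall ℓ q x p.1 / poch ℓ q p.1 * (1 / poch ℓ q p.2) * (1 - (q ^ ℓ) ^ (n + 1)) =
        fall ℓ q x p.1 / poch ℓ q p.1 * (1 - (q ^ ℓ) ^ p.1) * (1 / poch ℓ q p.2) +
        (q ^ ℓ) ^ p.1 * (fall ℓ q x p.1 / poch ℓ q p.1) *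
          ((1 - (q ^ ℓ) ^ p.2) * (1 / poch ℓ q p.2)) := by
      intro p hp
      rw [← mem_antidiagonal.mp hp, pow_add]
      ring
    rw [sum_mul, sum_congr rfl hsplit, sum_add_distrib,
      Finset.Nat.sum_antidiagonal_succ, Finset.Nat.sum_antidiagonal_succ', mul_sum]
    simp only [pow_zero, sub_self, mul_zero, zero_mul, zero_add]
    rw [← sum_add_distrib]
    refine sum_congr rfl fun p _ => ?_
    have e1 : fall ℓ q x (p.1 + 1) = fall ℓ q x p.1 * (x - (q ^ ℓ) ^ p.1) := by
      rw [fall, prod_range_succ, pow_mul, fall]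
    rw [e1, poch_succ, poch_succ]
    have := hp p.1
    have := hp p.2
    have := hs p.1
    have := hs p.2
    field_simp
    ring

lemma qint_prod {q : ℝ} (h0 : 0 < q) (h1 : q < 1) (hℓ : 1 ≤ ℓ) (k m : ℕ) :
    ∏ j ∈ Icc (k + 1) (k + m), qint q (j * ℓ) =
      poch ℓ q (k + m) / poch ℓ q k * ((1 - q)⁻¹) ^ m := by
  have hp := (poch_pos h0 h1 hℓ k).ne'
  induction m with
  | zero => simp [hp]
  | succ m ih =>
    rw [← add_assoc, prod_Icc_succ_top (by omega), ih, poch_succ, qint, geom_sum_eq (by linarith),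
      ← pow_mul, mul_comm ℓ, ← neg_sub 1 q, ← neg_sub 1 (q ^ _), neg_div_neg_eq]
    ring

open PowerSeries in
/-- The generating function of `(fmaj, fix)`, evaluated at reals. -/
lemma real_main {q : ℝ} (h0 : 0 < q) (h1 : q < 1) (hℓ : 1 ≤ ℓ) (x : ℝ) (n : ℕ) :
    ∑ σ : CP ℓ n, q ^ fmaj σ * x ^ fix σ =
      ∑ k ∈ range (n + 1), fall ℓ q x k * ∏ j ∈ Icc (k + 1) n, qint q (j * ℓ) := by
  have hp := fun n => (poch_pos h0 h1 hℓ n).ne'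
  let D : PowerSeries ℝ := PowerSeries.mk fun m => fixGF ℓ q m 0 / poch ℓ q m
  let E : ℝ → PowerSeries ℝ := fun x => PowerSeries.mk fun k => x ^ k / poch ℓ q k
  let P : PowerSeries ℝ := PowerSeries.mk fun k => fall ℓ q x k / poch ℓ q k
  let G : PowerSeries ℝ := PowerSeries.mk fun m => ((1 - q)⁻¹) ^ m
  have hDE : ∀ x n, coeff n (D * E x) =
      (∑ σ : CP ℓ n, q ^ fmaj σ * x ^ fix σ) / poch ℓ q n := by
    intro x n
    rw [coeff_mul, sum_by_fix, sum_div]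
    refine sum_congr rfl fun p hp' => ?_
    have := fixGF_eq h0 h1 hℓ p.1 p.2
    rw [mem_antidiagonal.mp hp'] at this
    change _ = fixGF ℓ q n p.2 * x ^ p.2 / _
    rw [mul_div_right_comm, this]
    simp only [D, E, coeff_mk]
    ring
  have hG : D * E 1 = G := by
    ext n
    rw [hDE]
    simpa [G] using fmaj_total h0 h1 hℓ n
  have hPE : P * E 1 = E x := by
    ext n
    rw [coeff_mul]
    simpa [P, E] using cauchy h0 h1 hℓ x n
  have key : D * E x = P * G := by
    rw [← hPE, ← hG]
    ring
  have hc := congrArg (coeff n) key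
  rw [hDE, div_eq_iff (hp n), coeff_mul, sum_mul] at hc
  rw [hc, Finset.Nat.sum_antidiagonal_eq_sum_range_succ_mk]
  refine sum_congr rfl fun k hk => ?_
  have hk : k ≤ n := by
    have := mem_range.mp hk
    omega
  have hq := qint_prod h0 h1 hℓ k (n - k)
  rw [Nat.add_sub_cancel' hk] at hq
  rw [hq]
  simp only [P, G, coeff_mk]
  ring

end FixMaj

/-! ### The distribution of `fmaf`, and passage to polynomials -/

namespace FixMaj

open CP

variable {ℓ n : ℕ}

/-- The subtraction in the definition of `maf` does not truncate. -/
lemma choose_two_le_sum (S : Finset ℕ) : S.card.choose 2 ≤ ∑ i ∈ S, i := by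
  induction S using Finset.induction_on_max with
  | empty => simp
  | insert a s ha ih =>
    have hna : a ∉ s := fun h => lt_irrefl _ (ha a h)
    have hle : s.card ≤ a := by
      simpa using card_le_card (show s ⊆ range a from fun x hx => mem_range.mpr (ha x hx))
    rw [sum_insert hna, card_insert_of_notMem hna, Nat.choose_succ_succ' _ 1, Nat.choose_one_right]
    exact add_le_add hle ih

/-- The `q`-binomial coefficient as a sum over subsets; induction on whether the largest element
belongs to the subset. The parameter `s` only serves the induction. -/
lemma subset_sum_aux (q : ℝ) (s : ℕ) : ∀ m k, m + k = s →
    (∑ S ∈ powersetCard k (range (m + k)), (q ^ ℓ) ^ (∑ i ∈ S, i)) * (poch ℓ q k * poch ℓ q m) =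
      (q ^ ℓ) ^ (k.choose 2) * poch ℓ q (m + k) := by
  induction s with
  | zero =>
    intro m k h
    obtain ⟨rfl, rfl⟩ : m = 0 ∧ k = 0 := by omega
    simp [poch]
  | succ s ih =>
    intro m k h
    rcases k with _ | k
    · simp [poch]
    rcases m with _ | m
    · have : powersetCard (k + 1) (range (0 + (k + 1))) = {range (k + 1)} := by
        rw [zero_add]
        have := powersetCard_self (range (k + 1))
        rwa [card_range] at this
      rw [this, sum_singleton, zero_add, Finset.sum_range_id, Nat.choose_two_right]
      simp [poch]
    · have h1 := ih m (k + 1) (by omega)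
      have h2 := ih (m + 1) k (by omega)
      have e1 : m + 1 + k = m + (k + 1) := by omega
      have e3 : m + 1 + (k + 1) = (m + (k + 1)) + 1 := by omega
      rw [e1] at h2
      have hinj : ∀ S ∈ powersetCard k (range (m + (k + 1))), m + (k + 1) ∉ S := by
        intro S hS hmem
        have := (mem_powersetCard.mp hS).1 hmem
        simp at this
      rw [e3, range_add_one, powersetCard_succ_insert (by simp), sum_union, sum_image]
      · have h3 : ∑ S ∈ powersetCard k (range (m + (k + 1))),
            (q ^ ℓ) ^ (∑ i ∈ insert (m + (k + 1)) S, i) =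
            (q ^ ℓ) ^ (m + (k + 1)) * ∑ S ∈ powersetCard k (range (m + (k + 1))),
              (q ^ ℓ) ^ (∑ i ∈ S, i) := by
          rw [mul_sum]
          refine sum_congr rfl fun S hS => ?_
          rw [sum_insert (hinj S hS), pow_add]
        rw [h3, poch_succ q (m + (k + 1))]
        rw [poch_succ q k] at h1 ⊢
        rw [poch_succ q m] at h2 ⊢
        rw [Nat.choose_succ_succ' k 1, Nat.choose_one_right] at h1 ⊢
        generalize (∑ S ∈ powersetCard (k + 1) (range (m + (k + 1))), (q ^ ℓ) ^ (∑ i ∈ S, i)) = A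
          at h1 ⊢
        generalize (∑ S ∈ powersetCard k (range (m + (k + 1))), (q ^ ℓ) ^ (∑ i ∈ S, i)) = B
          at h2 ⊢
        linear_combination (1 - (q ^ ℓ) ^ (m + 1)) * h1 +
          (q ^ ℓ) ^ (m + (k + 1)) * (1 - (q ^ ℓ) ^ (k + 1)) * h2
      · intro S hS T hT hST
        have := congrArg (fun U => U.erase (m + (k + 1))) hST
        simpa [erase_insert (hinj S hS), erase_insert (hinj T hT)] using this
      · rw [disjoint_left]
        intro S hS hS'
        obtain ⟨T, -, rfl⟩ := mem_image.mp hS'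
        have := (mem_powersetCard.mp hS).1 (mem_insert_self _ _)
        simp at this

/-- `subset_sum_aux` over subsets of `Fin (m + k)`, divided by the minimal weight `q^{ℓ k(k-1)/2}`. -/
lemma subset_sum {q : ℝ} (h0 : 0 < q) (m k : ℕ) :
    (∑ S ∈ powersetCard k (univ : Finset (Fin (m + k))),
      (q ^ ℓ) ^ ((∑ i ∈ S, (i : ℕ)) - k.choose 2)) * (poch ℓ q k * poch ℓ q m) =
      poch ℓ q (m + k) := by
  have h := subset_sum_aux (ℓ := ℓ) q (m + k) m k rfl
  have hmap : powersetCard k (range (m + k)) =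
      (powersetCard k (univ : Finset (Fin (m + k)))).map
        (mapEmbedding Fin.valEmbedding).toEmbedding := by
    rw [← powersetCard_map, Fin.map_valEmbedding_univ, Nat.Iio_eq_range]
  have hpos : (0 : ℝ) < (q ^ ℓ) ^ (k.choose 2) := by positivity
  have hsum : (∑ S ∈ powersetCard k (range (m + k)), (q ^ ℓ) ^ (∑ i ∈ S, i)) =
      (q ^ ℓ) ^ (k.choose 2) * ∑ S ∈ powersetCard k (univ : Finset (Fin (m + k))),
        (q ^ ℓ) ^ ((∑ i ∈ S, (i : ℕ)) - k.choose 2) := by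
    rw [hmap, sum_map, mul_sum]
    refine sum_congr rfl fun S hS => ?_
    have hle := choose_two_le_sum (S.map Fin.valEmbedding)
    rw [card_map, (mem_powersetCard.mp hS).2, sum_map] at hle
    rw [← pow_add]
    congr 1
    simp only [RelEmbedding.coe_toEmbedding, mapEmbedding_apply, sum_map]
    simp only [Fin.valEmbedding_apply] at hle ⊢
    omega
  rw [hsum, mul_assoc] at h
  exact mul_left_cancel₀ (ne_of_gt hpos) h

/-- `Reduces hm σ α`: the coloured permutation `σ` is supported outside `S`, where it is the
transport of `α` along the increasing enumeration of the complement of `S`. -/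
structure Reduces {S : Finset (Fin n)} {m : ℕ} (hm : Sᶜ.card = m) (σ : CP ℓ n) (α : CP ℓ m) :
    Prop where
  perm : ∀ i, σ.1 (Sᶜ.orderEmbOfFin hm i) = Sᶜ.orderEmbOfFin hm (α.1 i)
  color : ∀ i, σ.2 (Sᶜ.orderEmbOfFin hm i) = α.2 i
  fixed : ∀ i ∈ S, σ.1 i = i ∧ (σ.2 i : ℕ) = 0

section

variable {S : Finset (Fin n)} {m : ℕ} {hm : Sᶜ.card = m}

lemma mem_or_enum (hm : Sᶜ.card = m) (i : Fin n) :
    i ∈ S ∨ ∃ j, Sᶜ.orderEmbOfFin hm j = i := by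
  by_cases h : i ∈ S
  · exact Or.inl h
  · right
    have : i ∈ Set.range (Sᶜ.orderEmbOfFin hm) := by
      rw [range_orderEmbOfFin]
      simpa using h
    exact this

lemma enum_notMem (hm : Sᶜ.card = m) (j : Fin m) : Sᶜ.orderEmbOfFin hm j ∉ S :=
  mem_compl.mp (orderEmbOfFin_mem Sᶜ hm j)

lemma Reduces.fixSet_eq_iff {σ : CP ℓ n} {α : CP ℓ m} (h : Reduces hm σ α) :
    fixSet σ = S ↔ fix α = 0 := by
  have key : ∀ j, Sᶜ.orderEmbOfFin hm j ∈ fixSet σ ↔ j ∈ fixSet α := by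
    intro j
    simp only [fixSet, mem_filter, mem_univ, true_and, h.perm, h.color]
    simp
  rw [fix, card_eq_zero]
  constructor
  · intro hS
    refine eq_empty_of_forall_notMem fun j hj => ?_
    rw [← key, hS] at hj
    exact enum_notMem hm j hj
  · intro hα
    ext i
    rcases mem_or_enum hm i with hi | ⟨j, rfl⟩
    · simp [hi, fixSet, h.fixed i hi]
    · simp [key, hα, enum_notMem hm j]

lemma Reduces.right_unique {σ : CP ℓ n} {α β : CP ℓ m} (h : Reduces hm σ α)
    (h' : Reduces hm σ β) : α = β := by
  refine Prod.ext (Equiv.ext fun i => ?_) (funext fun i => ?_)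
  · apply (Sᶜ.orderEmbOfFin hm).injective
    rw [← h.perm, ← h'.perm]
  · rw [← h.color, ← h'.color]

lemma Reduces.left_unique {σ τ : CP ℓ n} {α : CP ℓ m} (h : Reduces hm σ α)
    (h' : Reduces hm τ α) : σ = τ := by
  refine Prod.ext (Equiv.ext fun i => ?_) (funext fun i => ?_)
  · rcases mem_or_enum hm i with hi | ⟨j, rfl⟩
    · rw [(h.fixed i hi).1, (h'.fixed i hi).1]
    · rw [h.perm, h'.perm]
  · rcases mem_or_enum hm i with hi | ⟨j, rfl⟩
    · exact Fin.ext (by rw [(h.fixed i hi).2, (h'.fixed i hi).2])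
    · rw [h.color, h'.color]

lemma exists_right (hm : Sᶜ.card = m) {σ : CP ℓ n} (hσ : fixSet σ = S) :
    ∃ α : CP ℓ m, Reduces hm σ α := by
  have hfix : ∀ i ∈ S, σ.1 i = i ∧ (σ.2 i : ℕ) = 0 := by
    intro i hi
    rw [← hσ] at hi
    simpa [fixSet] using hi
  have hex : ∀ j, ∃ r, Sᶜ.orderEmbOfFin hm r = σ.1 (Sᶜ.orderEmbOfFin hm j) := by
    intro j
    rcases mem_or_enum hm (σ.1 (Sᶜ.orderEmbOfFin hm j)) with h | h
    · have := σ.1.injective (hfix _ h).1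
      rw [this] at h
      exact absurd h (enum_notMem hm j)
    · exact h
  choose f hf using hex
  have hinj : Function.Injective f := by
    intro i j hij
    apply (Sᶜ.orderEmbOfFin hm).injective
    apply σ.1.injective
    rw [← hf, ← hf, hij]
  exact ⟨(Equiv.ofBijective f (Finite.injective_iff_bijective.mp hinj),
    fun i => σ.2 (Sᶜ.orderEmbOfFin hm i)), fun i => by simp [hf], fun i => rfl, hfix⟩

lemma exists_left (hℓ : 1 ≤ ℓ) (hm : Sᶜ.card = m) (α : CP ℓ m) :
    ∃ σ : CP ℓ n, Reduces hm σ α := by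
  let e := Sᶜ.orderIsoOfFin hm
  have he : ∀ i, Sᶜ.orderEmbOfFin hm i = (e i : Fin n) := fun i => by simp [e]
  refine ⟨(Equiv.Perm.ofSubtype (e.toEquiv.permCongr α.1),
    fun i => if h : i ∈ Sᶜ then α.2 (e.symm ⟨i, h⟩) else ⟨0, hℓ⟩), ?_, ?_, ?_⟩
  · intro i
    simp only [he]
    rw [Equiv.Perm.ofSubtype_apply_coe]
    simp [Equiv.permCongr_apply]
  · intro i
    simp only [he]
    rw [dif_pos (e i).2]
    simp
  · intro i hi
    have hi' : i ∉ Sᶜ := by simpa using hi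
    refine ⟨Equiv.Perm.ofSubtype_apply_of_not_mem _ hi', ?_⟩
    simp [hi]

lemma Reduces.col_eq {σ : CP ℓ n} {α : CP ℓ m} (h : Reduces hm σ α) : col σ = col α := by
  rw [col, col, ← sum_add_sum_compl S, sum_eq_zero (fun i hi => (h.fixed i hi).2), zero_add,
    ← sum_coe_sort, ← (Sᶜ.orderIsoOfFin hm).toEquiv.sum_comp]
  refine sum_congr rfl fun i _ => ?_
  rw [← h.color]
  simp

lemma orderEmbOfFin_congr {s t : Finset (Fin n)} (hst : s = t) (hs : s.card = m)
    (ht : t.card = m) (i : Fin m) : s.orderEmbOfFin hs i = t.orderEmbOfFin ht i := by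
  subst hst
  rfl

lemma Reduces.maj_Der {σ : CP ℓ n} {α : CP ℓ m} (h : Reduces hm σ α) (hσ : fixSet σ = S) :
    maj (Der σ) = maj α := by
  subst hσ
  obtain rfl : n - fix σ = m := (card_nonfix σ).symm.trans hm
  have himg : ((fixSet σ)ᶜ).image σ.1 = (fixSet σ)ᶜ := by
    apply eq_of_subset_of_card_le
    · intro v hv
      obtain ⟨p, hp, rfl⟩ := mem_image.mp hv
      simp only [mem_compl, fixSet, mem_filter, mem_univ, true_and] at hp ⊢
      rintro ⟨h1, h2⟩
      have := σ.1.injective h1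
      rw [this] at h2
      exact hp ⟨this, h2⟩
    · rw [card_image_of_injective _ σ.1.injective]
  congr 1
  refine Prod.ext (Equiv.ext fun i => ?_) (funext fun i => ?_)
  · simp only [Der, Equiv.trans_apply]
    change ((((fixSet σ)ᶜ).image σ.1).orderIsoOfFin (card_vals σ)).symm _ = _
    rw [OrderIso.symm_apply_eq]
    apply Subtype.ext
    rw [coe_orderIsoOfFin_apply, orderEmbOfFin_congr himg _ hm, ← h.perm]
    simp [derMid]
  · rw [← h.color]
    simp [Der]

end

/-- Coloured permutations with prescribed fixed point set `S` correspond to derangements. -/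
lemma sum_fixSet_eq (hℓ : 1 ≤ ℓ) (q : ℝ) {m k : ℕ} (S : Finset (Fin (m + k)))
    (hS : S.card = k) :
    ∑ σ : CP ℓ (m + k) with fixSet σ = S, q ^ fmaf σ =
      (q ^ ℓ) ^ ((∑ i ∈ S, (i : ℕ)) - k.choose 2) * fixGF ℓ q m 0 := by
  have hm : Sᶜ.card = m := by
    rw [card_compl, Fintype.card_fin, hS]
    omega
  rw [fixGF, mul_sum]
  choose f hf using fun α : CP ℓ m => exists_left hℓ hm α
  symm
  refine sum_bij (fun α _ => f α) ?_ ?_ ?_ ?_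
  · intro α hα
    simp only [mem_filter, mem_univ, true_and] at hα ⊢
    exact (hf α).fixSet_eq_iff.mpr hα
  · intro α _ β _ h
    have := hf β
    rw [← h] at this
    exact (hf α).right_unique this
  · intro σ hσ
    simp only [mem_filter, mem_univ, true_and] at hσ
    obtain ⟨α, hα⟩ := exists_right hm hσ
    refine ⟨α, ?_, (hf α).left_unique hα⟩
    simpa using hα.fixSet_eq_iff.mp hσ
  · intro α hα
    simp only [mem_filter, mem_univ, true_and] at hα
    have hfs := (hf α).fixSet_eq_iff.mpr hα
    rw [fmaf, maf, (hf α).maj_Der hfs, (hf α).col_eq, fix, hfs, hS, fmaj, ← pow_mul, ← pow_add]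
    ring

/-- `fmaf` and `fmaj` are equidistributed on coloured permutations with `k` fixed points. -/
lemma fmaf_eq_fixGF {q : ℝ} (h0 : 0 < q) (h1 : q < 1) (hℓ : 1 ≤ ℓ) (m k : ℕ) :
    ∑ σ : CP ℓ (m + k) with fix σ = k, q ^ fmaf σ = fixGF ℓ q (m + k) k := by
  rw [← sum_fiberwise_of_maps_to (t := powersetCard k univ) (g := fixSet)]
  · have h : ∀ S ∈ powersetCard k (univ : Finset (Fin (m + k))),
        (∑ σ ∈ (univ.filter fun σ : CP ℓ (m + k) => fix σ = k) with fixSet σ = S, q ^ fmaf σ) =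
        (q ^ ℓ) ^ ((∑ i ∈ S, (i : ℕ)) - k.choose 2) * fixGF ℓ q m 0 := by
      intro S hS
      rw [← sum_fixSet_eq hℓ q S (mem_powersetCard.mp hS).2]
      refine sum_congr ?_ fun _ _ => rfl
      ext σ
      simp only [mem_filter, mem_univ, true_and, and_iff_right_iff_imp]
      intro hσ
      rw [fix, hσ, (mem_powersetCard.mp hS).2]
    rw [sum_congr rfl h, ← sum_mul]
    have e1 := fixGF_eq h0 h1 hℓ m k
    have e2 := subset_sum (ℓ := ℓ) h0 m k
    have p1 := (poch_pos h0 h1 hℓ m).ne'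
    have p2 := (poch_pos h0 h1 hℓ k).ne'
    have p3 := (poch_pos h0 h1 hℓ (m + k)).ne'
    rw [div_eq_iff p3, ← e2] at e1
    rw [e1]
    field_simp
  · intro σ hσ
    simp only [mem_filter, mem_univ, true_and] at hσ
    exact mem_powersetCard.mpr ⟨subset_univ _, hσ⟩

lemma real_fmaf {q : ℝ} (h0 : 0 < q) (h1 : q < 1) (hℓ : 1 ≤ ℓ) (x : ℝ) (n : ℕ) :
    ∑ σ : CP ℓ n, q ^ fmaf σ * x ^ fix σ = ∑ σ : CP ℓ n, q ^ fmaj σ * x ^ fix σ := by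
  rw [sum_by_fix, sum_by_fix]
  refine sum_congr rfl fun p hp => ?_
  obtain rfl := mem_antidiagonal.mp hp
  rw [fmaf_eq_fixGF h0 h1 hℓ, fixGF]

open MvPolynomial in
/-- Integer polynomials in `q, x` agreeing for all real `q ∈ (0, 1)` and all real `x` are equal. -/
lemma poly_ext {P R : MvPolynomial (Fin 2) ℤ}
    (h : ∀ q x : ℝ, 0 < q → q < 1 → aeval ![q, x] P = aeval ![q, x] R) : P = R := by
  apply MvPolynomial.map_injective (Int.castRingHom ℝ) Int.cast_injective
  refine MvPolynomial.funext_set ![Set.Ioo 0 1, Set.univ] ?_ ?_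
  · intro i
    fin_cases i
    · exact Set.Ioo_infinite one_pos
    · exact Set.infinite_univ
  · intro v hv
    have hv0 : v 0 ∈ Set.Ioo (0 : ℝ) 1 := hv 0 trivial
    have := h (v 0) (v 1) hv0.1 hv0.2
    have hv' : ![v 0, v 1] = v := by
      ext i
      fin_cases i <;> rfl
    rw [hv'] at this
    simpa [eval_map, aeval_def] using this

open MvPolynomial in
lemma aeval_gPoly (ℓ n : ℕ) (q x : ℝ) : aeval ![q, x] (gPoly ℓ n) =
    ∑ k ∈ range (n + 1), fall ℓ q x k * ∏ j ∈ Icc (k + 1) n, qint q (j * ℓ) := by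
  simp [gPoly, fall, qint]

end FixMaj

open MvPolynomial in
/-- `Σ_{σ ∈ G_{ℓ,n}} q^{fmaj σ} x^{fix σ} = g_{ℓ,n}(q,x)
 = Σ_{σ ∈ G_{ℓ,n}} q^{fmaf σ} x^{fix σ}` as polynomials in `q`, `x`. -/
theorem generating_function_fix_fmaj_fmaf (ℓ n : ℕ) (hℓ : 1 ≤ ℓ) :
    (∑ σ : CP ℓ n,
        (X 0 : MvPolynomial (Fin 2) ℤ) ^ CP.fmaj σ * (X 1) ^ CP.fix σ) = gPoly ℓ n ∧
    (∑ σ : CP ℓ n,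
        (X 0 : MvPolynomial (Fin 2) ℤ) ^ CP.fmaf σ * (X 1) ^ CP.fix σ) = gPoly ℓ n := by
  constructor
  · refine FixMaj.poly_ext fun q x h0 h1 => ?_
    rw [FixMaj.aeval_gPoly, ← FixMaj.real_main h0 h1 hℓ]
    simp
  · refine FixMaj.poly_ext fun q x h0 h1 => ?_
    rw [FixMaj.aeval_gPoly, ← FixMaj.real_main h0 h1 hℓ, ← FixMaj.real_fmaf h0 h1 hℓ]
    simp
end

section
/- Fix integers ℓ≥1 and n≥0. The statistic fmaf is Mahonian on G_{ℓ,n}: Σ_{σ ∈ G_{ℓ,n}} q^{fmaf σ} = [ℓ]_q [2ℓ]_q ⋯ [nℓ]_q as polynomials in q. -/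
/-!
The flag major index `fmaj = ℓ · maj + col` is Mahonian, and `fmaf` has the same distribution.

*`fmaj` is Mahonian* (`CP.sum_fmaj`). An element of `G_{ℓ,n+1}` is determined by its last letter and
by the standardization `π ∈ G_{ℓ,n}` of the remaining word. Let `r` be the number of letters of
`Σ_{ℓ,n+1}` larger than the last letter. The generating function of `fmaj` over all elements with
this last letter is `q^r [ℓ]_q ⋯ [nℓ]_q` (`CP.sum_fmaj_append`). This goes by induction: the rank of
the last letter of `π` runs over `0, …, N - 1` with `N = nℓ`, and it yields a descent, hence an extra
factor `q^N`, exactly when it is below some threshold `t`; the exponents are thus rotated to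
`t, …, t + N - 1` (`sum_rotate`). Summing over `r` gives the product formula.

*`fmaf` and `fmaj` are equidistributed* (`CP.sum_fmaf_eq_sum_fmaj`). A colored permutation `σ` is
the same as the pair of its set `S` of nonfixed places and its derangement part `τ = Der σ`. Fix `τ`,
of size `m`. Both statistics have the same `col`, so it suffices to compare, with `Q = q^ℓ`, the sums
over `S` of `Q^maf` and `Q^maj`; both equal `Q^(maj τ)` times the `Q`-binomial coefficient
`[n choose m]_Q`. For `maf` this is the classical generating function of subsets by their sum
(`sum_inv`). For `maj`, whether a letter of `τ` forms a descent with a neighbouring fixed point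
depends only on whether it is an excedance: excedances behave as larger, and all other letters as
smaller, than every fixed point (`CP.gtLetter_insertFixed`). So `σ` has the descents of a shuffle of
`τ` with copies of one letter, and the sum is evaluated by induction on the length, refined by the
origin of the last letter, using both Pascal recursions (`shuffle_aux`, `shuffle`).
-/

open Finset

/-! ### `Q`-binomial coefficients -/

/-- The `Q`-binomial coefficient, through one of its Pascal recursions. -/
def qB {R : Type*} [CommSemiring R] (Q : R) : ℕ → ℕ → R
  | _, 0 => 1
  | 0, _ + 1 => 0
  | n + 1, m + 1 => qB Q n m + Q ^ (m + 1) * qB Q n (m + 1)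

section
variable {R : Type*} [CommSemiring R] (Q : R)

lemma qB_zero_right (n : ℕ) : qB Q n 0 = 1 := by cases n <;> rfl

lemma qB_succ (n m : ℕ) : qB Q (n + 1) (m + 1) = qB Q n m + Q ^ (m + 1) * qB Q n (m + 1) := rfl

lemma qB_of_lt : ∀ {n m : ℕ}, n < m → qB Q n m = 0
  | _, 0, h => by omega
  | 0, _ + 1, _ => rfl
  | n + 1, m + 1, h => by
    rw [qB_succ, qB_of_lt (by omega), qB_of_lt (by omega)]; simp

/-- The other Pascal recursion. -/
lemma qB_succ' : ∀ n m : ℕ, qB Q (n + 1) (m + 1) = Q ^ (n - m) * qB Q n m + qB Q n (m + 1)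
  | 0, 0 => by simp [qB]
  | 0, m + 1 => by simp [qB]
  | n + 1, 0 => by
    have h := qB_succ' n 0
    have h2 := qB_succ Q n 0
    rw [qB_succ, h]
    simp only [qB_zero_right] at *
    nth_rewrite 2 [← h]
    rw [h2]
    simp
    ring
  | n + 1, m + 1 => by
    rcases lt_or_ge n (m + 1) with hlt | hge
    · rw [qB_succ, qB_of_lt Q (show n + 1 < m + 1 + 1 by omega)]
      rcases Nat.lt_or_ge n m with h | h
      · simp [qB_of_lt Q (show n + 1 < m + 1 by omega)]
      · simp [show n - m = 0 by omega]
    · obtain ⟨k, rfl⟩ := Nat.exists_eq_add_of_le hge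
      have i1 := qB_succ' (m + 1 + k) m
      have i2 := qB_succ' (m + 1 + k) (m + 1)
      rw [show m + 1 + k - m = k + 1 by omega] at i1
      rw [show m + 1 + k - (m + 1) = k by omega] at i2
      rw [show m + 1 + k + 1 - (m + 1) = k + 1 by omega]
      calc qB Q (m + 1 + k + 1 + 1) (m + 1 + 1)
          = (Q ^ (k + 1) * qB Q (m + 1 + k) m + qB Q (m + 1 + k) (m + 1)) + Q ^ (m + 1 + 1) *
              (Q ^ k * qB Q (m + 1 + k) (m + 1) + qB Q (m + 1 + k) (m + 1 + 1)) := by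
            rw [qB_succ, i1, i2]
        _ = Q ^ (k + 1) * qB Q (m + 1 + k + 1) (m + 1) + qB Q (m + 1 + k + 1) (m + 1 + 1) := by
            rw [qB_succ Q (m + 1 + k) m, qB_succ Q (m + 1 + k) (m + 1)]; ring

end

/-! ### Major index of shuffles with a repeated letter -/

section Shuffle
open Classical in
/-- `shufDes e d S i`: there is a descent between the places `i` and `i + 1` in the shuffle of a word
`w`, whose letters occupy the places in `S`, with copies of a letter `F` at all other places. Here
`d r` says that `w` has a descent at `r`, and `e r` says that the letter `r` of `w` is larger than
`F`; the other letters of `w` are smaller than `F`. Places are 0-based. -/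
def shufDes (e d : ℕ → Prop) (S : Finset ℕ) (i : ℕ) : Prop :=
  if i ∈ S then
    if i + 1 ∈ S then d #{j ∈ S | j < i} else e #{j ∈ S | j < i}
  else
    if i + 1 ∈ S then ¬ e #{j ∈ S | j < i} else False

open Classical in
/-- The sum of the 1-based places `i + 1` over the 0-based places `i < n` satisfying `d`; it is the
major index of a word of length `n + 1` with descents given by `d`. -/
noncomputable def placeSum (d : ℕ → Prop) (n : ℕ) : ℕ := ∑ i ∈ range n, if d i then i + 1 else 0

open Classical in
lemma placeSum_succ (d : ℕ → Prop) (n : ℕ) :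
    placeSum d (n + 1) = placeSum d n + if d n then n + 1 else 0 := by
  simp [placeSum, sum_range_succ]

lemma placeSum_congr {d d' : ℕ → Prop} {n : ℕ} (h : ∀ i < n, (d i ↔ d' i)) :
    placeSum d n = placeSum d' n := by
  classical
  unfold placeSum
  refine sum_congr rfl fun i hi => ?_
  exact if_congr (h i (mem_range.1 hi)) rfl rfl

lemma shufDes_insert (e d : ℕ → Prop) (S : Finset ℕ) {n i : ℕ} (h : i + 1 < n) :
    shufDes e d (insert n S) i ↔ shufDes e d S i := by
  have h1 : ({j ∈ insert n S | j < i} : Finset ℕ) = {j ∈ S | j < i} := by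
    ext j; simp only [mem_filter, mem_insert]; grind
  have h2 : i ≠ n := by omega
  have h3 : i + 1 ≠ n := by omega
  simp [shufDes, h1, h2, h3]

lemma sum_powersetCard_range_succ {R : Type*} [AddCommMonoid R] (n m : ℕ) (g : Finset ℕ → R) :
    ∑ S ∈ powersetCard (m + 1) (range (n + 1)), g S =
      ∑ S ∈ powersetCard m (range n), g (insert n S) +
        ∑ S ∈ powersetCard (m + 1) (range n), g S := by
  rw [range_add_one, powersetCard_succ_insert (by simp), sum_union, sum_image, add_comm]
  · intro S hS T hT h
    have hS' := (mem_powersetCard.1 hS).1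
    have hT' := (mem_powersetCard.1 hT).1
    have a : n ∉ S := fun h => by simpa using hS' h
    have b : n ∉ T := fun h => by simpa using hT' h
    rw [← erase_insert a, h, erase_insert b]
  · rw [disjoint_left]
    intro S hS hS2
    obtain ⟨T, hT, rfl⟩ := mem_image.1 hS2
    have := (mem_powersetCard.1 hS).1 (mem_insert_self n T)
    simp at this

variable {R : Type*} [CommSemiring R] (Q : R) (e d : ℕ → Prop)

open Classical in
/-- The distribution of the major index over shuffles of length `n + 1`, refined by the last letter.
In the first part the last letter is the letter `m` of the word `w`; in the other two it is `F`, with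
none, respectively `m + 1`, of the letters of `w` before it. The hypotheses express that the descents
of `w` are compatible with comparing its letters to `F`. -/
lemma shuffle_aux
    (h1 : ∀ i, e i → ¬ e (i + 1) → d i) (h2 : ∀ i, ¬ e i → e (i + 1) → ¬ d i) (n : ℕ) :
    (∀ m, ∑ S ∈ powersetCard m (range n), Q ^ placeSum (shufDes e d (insert n S)) n =
      Q ^ placeSum d m * (qB Q n m * if e m then 1 else Q ^ (n - m))) ∧
    (∑ S ∈ powersetCard 0 (range n), Q ^ placeSum (shufDes e d S) n = 1) ∧
    (∀ m, ∑ S ∈ powersetCard (m + 1) (range n), Q ^ placeSum (shufDes e d S) n =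
      Q ^ placeSum d m * (qB Q n (m + 1) * if e m then Q ^ (m + 1) else 1)) := by
  induction n with
  | zero =>
    refine ⟨fun m => ?_, ?_, fun m => ?_⟩
    · cases m with
      | zero => simp [placeSum, qB]
      | succ m => rw [powersetCard_eq_empty.2 (by simp)]; simp [qB]
    · simp [placeSum]
    · rw [powersetCard_eq_empty.2 (by simp)]; simp [qB]
  | succ n ih =>
    obtain ⟨ihL, ihZ, ihF⟩ := ih
    have cardlt : ∀ {m} {S : Finset ℕ}, S ∈ powersetCard m (range n) →
        n ∉ S ∧ n + 1 ∉ S ∧ #{j ∈ S | j < n} = m := by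
      intro m S hS
      obtain ⟨a, b⟩ := mem_powersetCard.1 hS
      refine ⟨fun h => by simpa using a h, fun h => by simpa using a h, ?_⟩
      rw [filter_true_of_mem fun j hj => mem_range.1 (a hj), b]
    -- Effect of one more letter, according to whether the last two letters are `F` or letters (`L`) of
    -- the word `w`: `hF` is the case of two letters `F`, `hFL` that of `F` followed by `L`, etc.
    have hF : ∀ {m} {S : Finset ℕ}, S ∈ powersetCard m (range n) →
        placeSum (shufDes e d S) (n + 1) = placeSum (shufDes e d S) n := by
      intro m S hS
      obtain ⟨a, b, c⟩ := cardlt hS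
      rw [placeSum_succ, if_neg (by simp [shufDes, a, b]), add_zero]
    have hFL : ∀ {m} {S : Finset ℕ}, S ∈ powersetCard m (range n) →
        placeSum (shufDes e d (insert (n + 1) S)) (n + 1) =
          placeSum (shufDes e d S) n + if e m then 0 else n + 1 := by
      intro m S hS
      obtain ⟨a, b, c⟩ := cardlt hS
      have c' : ({j ∈ insert (n + 1) S | j < n} : Finset ℕ) = {j ∈ S | j < n} := by
        rw [filter_insert, if_neg (by omega)]
      rw [placeSum_succ, placeSum_congr fun i hi => shufDes_insert e d S (by omega)]
      congr 1
      simp only [shufDes, c', c]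
      by_cases h : e m <;> simp [a, h]
    have hLF : ∀ {m} {S : Finset ℕ}, S ∈ powersetCard m (range n) →
        placeSum (shufDes e d (insert n S)) (n + 1) =
          placeSum (shufDes e d (insert n S)) n + if e m then n + 1 else 0 := by
      intro m S hS
      obtain ⟨a, b, c⟩ := cardlt hS
      have c' : ({j ∈ insert n S | j < n} : Finset ℕ) = {j ∈ S | j < n} := by
        rw [filter_insert, if_neg (by omega)]
      rw [placeSum_succ]
      congr 1
      simp only [shufDes, c', c]
      by_cases h : e m <;> simp [b, h]
    have hLL : ∀ {m} {S : Finset ℕ}, S ∈ powersetCard m (range n) →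
        placeSum (shufDes e d (insert (n + 1) (insert n S))) (n + 1) =
          placeSum (shufDes e d (insert n S)) n + if d m then n + 1 else 0 := by
      intro m S hS
      obtain ⟨a, b, c⟩ := cardlt hS
      have c' : ({j ∈ insert (n + 1) (insert n S) | j < n} : Finset ℕ) = {j ∈ S | j < n} := by
        rw [filter_insert, if_neg (by omega), filter_insert, if_neg (by omega)]
      rw [placeSum_succ, placeSum_congr fun i hi => shufDes_insert e d _ (by omega)]
      congr 1
      simp only [shufDes, c', c]
      by_cases h : d m <;> simp [h]
    refine ⟨fun m => ?_, ?_, fun m => ?_⟩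
    · cases m with
      | zero =>
        have : ∑ S ∈ powersetCard 0 (range (n + 1)),
            Q ^ placeSum (shufDes e d (insert (n + 1) S)) (n + 1) =
            ∑ S ∈ powersetCard 0 (range n), Q ^ placeSum (shufDes e d S) n *
              Q ^ (if e 0 then 0 else n + 1) := by
          rw [show powersetCard 0 (range (n + 1)) = powersetCard 0 (range n) by simp]
          exact sum_congr rfl fun S hS => by rw [hFL hS, pow_add]
        rw [this, ← sum_mul, ihZ]
        by_cases h : e 0 <;> simp [h, placeSum, qB_zero_right]
      | succ m =>
        rw [sum_powersetCard_range_succ,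
          sum_congr rfl fun S hS => by rw [hLL hS, pow_add],
          sum_congr (s₁ := powersetCard (m + 1) (range n)) rfl
            fun S hS => by rw [hFL hS, pow_add],
          ← sum_mul, ← sum_mul, ihL, ihF, placeSum_succ, pow_add]
        rcases lt_or_ge n m with hnm | hnm
        · rw [qB_of_lt Q hnm, qB_of_lt Q (show n < m + 1 by omega),
            qB_of_lt Q (show n + 1 < m + 1 by omega)]
          simp
        obtain ⟨k, rfl⟩ := Nat.exists_eq_add_of_le hnm
        have p1 := qB_succ Q (m + k) m
        have p2 := qB_succ' Q (m + k) m
        rw [show m + k - m = k by omega] at *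
        rw [show m + k + 1 - (m + 1) = k by omega]
        by_cases ha : e m <;> by_cases hb : e (m + 1)
        · by_cases hd : d m
          · simp only [ha, hb, hd, if_true]; rw [p2]; ring
          · simp only [ha, hb, hd, if_true, if_false]; rw [p1]; ring
        · have hd := h1 m ha hb
          simp only [ha, hb, hd, if_true, if_false]; rw [p1]; ring
        · have hd := h2 m ha hb
          simp only [ha, hb, hd, if_true, if_false]; rw [p2]; ring
        · by_cases hd : d m
          · simp only [ha, hb, hd, if_true, if_false]; rw [p2]; ring
          · simp only [ha, hb, hd, if_false]; rw [p1]; ring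
    · rw [← ihZ, show powersetCard 0 (range (n + 1)) = powersetCard 0 (range n) by simp]
      exact sum_congr rfl fun S hS => by rw [hF hS]
    · rw [sum_powersetCard_range_succ,
        sum_congr rfl fun S hS => by rw [hLF hS, pow_add],
        sum_congr (s₁ := powersetCard (m + 1) (range n)) rfl
          fun S hS => by rw [hF hS],
        ← sum_mul, ihL, ihF]
      rcases lt_or_ge n m with hnm | hnm
      · rw [qB_of_lt Q hnm, qB_of_lt Q (show n < m + 1 by omega),
          qB_of_lt Q (show n + 1 < m + 1 by omega)]
        simp
      obtain ⟨k, rfl⟩ := Nat.exists_eq_add_of_le hnm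
      have p1 := qB_succ Q (m + k) m
      have p2 := qB_succ' Q (m + k) m
      rw [show m + k - m = k by omega] at *
      by_cases ha : e m
      · simp only [ha, if_true]; rw [p2]; ring
      · simp only [ha, if_false]; rw [p2]; ring

/-- The major index over the shuffles of a word of length `m` with `n - m` copies of `F` is
distributed as `Q ^ maj` of the word times a `Q`-binomial coefficient. -/
lemma shuffle
    (h1 : ∀ i, e i → ¬ e (i + 1) → d i) (h2 : ∀ i, ¬ e i → e (i + 1) → ¬ d i) (n m : ℕ) :
    ∑ S ∈ powersetCard m (range n), Q ^ placeSum (shufDes e d S) (n - 1) =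
      Q ^ placeSum d (m - 1) * qB Q n m := by
  cases n with
  | zero => cases m <;> simp [placeSum, qB]
  | succ n =>
    obtain ⟨hL, hZ, hF⟩ := shuffle_aux Q e d h1 h2 n
    cases m with
    | zero =>
      rw [show powersetCard 0 (range (n + 1)) = powersetCard 0 (range n) by simp]
      simp only [Nat.add_sub_cancel]
      rw [hZ]; simp [placeSum, qB_zero_right]
    | succ m =>
      simp only [Nat.add_sub_cancel]
      rw [sum_powersetCard_range_succ, hL, hF]
      by_cases ha : e m
      · simp only [ha, if_true]; rw [qB_succ]; ring
      · simp only [ha, if_false]; rw [qB_succ']; ring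

/-- The truncated subtraction in `sum_inv` never truncates. -/
lemma choose_two_le_sum : ∀ (n : ℕ) (T : Finset ℕ), T ⊆ range n → (#T).choose 2 ≤ ∑ i ∈ T, i
  | 0, T, h => by simp_all
  | n + 1, T, h => by
    by_cases hn : n ∈ T
    · have h' : T.erase n ⊆ range n := fun i hi => by
        have := h (mem_of_mem_erase hi)
        have := ne_of_mem_erase hi
        simp at *; omega
      have ih := choose_two_le_sum n _ h'
      have hc := card_le_card h'
      rw [card_range] at hc
      rw [← add_sum_erase T _ hn, ← card_erase_add_one hn, Nat.choose_succ_succ' _ 1]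
      simp; omega
    · exact choose_two_le_sum n T fun i hi => by
        have := h hi
        have : i ≠ n := fun h => hn (h ▸ hi)
        simp at *; omega

/-- If `i_1 < ⋯ < i_k` are the 0-based elements of the complement of `S`, the exponent is
`Σ_j (i_j - (j - 1))`, the number of inversions between `S` and its complement. -/
lemma sum_inv (n m : ℕ) :
    ∑ S ∈ powersetCard m (range n), Q ^ (∑ i ∈ range n \ S, i - (n - m).choose 2) = qB Q n m := by
  induction n generalizing m with
  | zero => cases m <;> simp [qB]
  | succ n ih =>
    have hF : ∀ {m} {S : Finset ℕ}, S ∈ powersetCard m (range n) →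
        ∑ i ∈ range (n + 1) \ S, i - (n + 1 - m).choose 2 =
          m + (∑ i ∈ range n \ S, i - (n - m).choose 2) := by
      intro m S hS
      obtain ⟨a, b⟩ := mem_powersetCard.1 hS
      have hc := card_le_card a
      rw [card_range] at hc
      have h := choose_two_le_sum n (range n \ S) sdiff_subset
      rw [card_sdiff_of_subset a, card_range, b] at h
      rw [range_add_one, insert_sdiff_of_notMem _ fun h => by simpa using a h,
        sum_insert (by simp), show n + 1 - m = (n - m) + 1 by omega, Nat.choose_succ_succ' _ 1]
      simp; omega
    cases m with
    | zero =>
      rw [show powersetCard 0 (range (n + 1)) = powersetCard 0 (range n) by simp,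
        sum_congr rfl fun S hS => by rw [hF hS, zero_add], ih, qB_zero_right, qB_zero_right]
    | succ m =>
      rw [sum_powersetCard_range_succ, qB_succ, ← ih, ← ih, mul_sum]
      congr 1
      · refine sum_congr rfl fun S hS => ?_
        obtain ⟨a, b⟩ := mem_powersetCard.1 hS
        congr 2
        · congr 1
          ext i; simp only [mem_sdiff, mem_range, mem_insert]; grind
        · congr 1; omega
      · exact sum_congr rfl fun S hS => by rw [hF hS, pow_add]

end Shuffle

/-! ### The flag major index is Mahonian -/

namespace CP

/-- The colored permutation with last letter `ζ^c (v + 1)` (0-based value `v`) whose other letters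
standardize to `π`. -/
def append {ℓ n : ℕ} (c : Fin ℓ) (v : Fin (n + 1)) (π : CP ℓ n) : CP ℓ (n + 1) :=
  (finSuccEquivLast.trans ((Equiv.optionCongr π.1).trans (finSuccEquiv' v).symm),
    Fin.snoc π.2 c)

section
variable {ℓ n : ℕ} (c : Fin ℓ) (v : Fin (n + 1)) (π : CP ℓ n)

lemma append_fst_last : (append c v π).1 (Fin.last n) = v := by simp [append]

lemma append_fst_castSucc (i : Fin n) :
    (append c v π).1 i.castSucc = v.succAbove (π.1 i) := by simp [append]

lemma append_snd_last : (append c v π).2 (Fin.last n) = c := by simp [append]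

lemma append_snd_castSucc (i : Fin n) : (append c v π).2 i.castSucc = π.2 i := by simp [append]

lemma append_bijective :
    Function.Bijective fun x : Fin ℓ × Fin (n + 1) × CP ℓ n => append x.1 x.2.1 x.2.2 := by
  rw [Fintype.bijective_iff_injective_and_card]
  constructor
  · rintro ⟨c, v, π⟩ ⟨c', v', π'⟩ h
    simp only at h
    have hc : c = c' := by rw [← append_snd_last c v π, h, append_snd_last]
    have hv : v = v' := by rw [← append_fst_last c v π, h, append_fst_last]
    subst hc hv
    congr 2
    ext i
    · have := append_fst_castSucc c v π i
      rw [h, append_fst_castSucc] at this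
      rw [v.succAbove_right_injective this]
    · rw [← append_snd_castSucc c v π i, h, append_snd_castSucc]
  · simp [Fintype.card_perm, Nat.factorial_succ, pow_succ]
    ring

lemma sum_append {R : Type*} [AddCommMonoid R] (g : CP ℓ (n + 1) → R) :
    ∑ σ, g σ = ∑ c : Fin ℓ, ∑ v : Fin (n + 1), ∑ π : CP ℓ n, g (append c v π) := by
  rw [← (append_bijective (ℓ := ℓ) (n := n)).sum_comp g, Fintype.sum_prod_type]
  simp_rw [Fintype.sum_prod_type (f := fun x : Fin (n + 1) × CP ℓ n => g (append _ x.1 x.2))]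

lemma maj_eq (σ : CP ℓ n) :
    maj σ = placeSum (fun i => gtLetter (letter σ i) (letter σ (i + 1))) (n - 1) := by
  rw [maj, desSet, sum_filter, placeSum]
  exact sum_congr rfl fun i _ => by congr

lemma letter_append_of_lt {i : ℕ} (h : i < n) :
    letter (append c v π) i = ((π.2 ⟨i, h⟩ : ℕ), (v.succAbove (π.1 ⟨i, h⟩) : ℕ)) := by
  have h' : i < n + 1 := by omega
  rw [letter, dif_pos h', ← append_fst_castSucc c v, ← append_snd_castSucc c v]
  rfl

lemma letter_append_last : letter (append c v π) n = ((c : ℕ), (v : ℕ)) := by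
  rw [letter, dif_pos (by omega)]
  exact Prod.ext (congrArg Fin.val (append_snd_last c v π))
    (congrArg Fin.val (append_fst_last c v π))

lemma col_append : col (append c v π) = col π + c := by
  simp only [col, Fin.sum_univ_castSucc, append_snd_castSucc, append_snd_last]

lemma gtLetter_append {i : ℕ} (h : i + 1 < n) :
    gtLetter (letter (append c v π) i) (letter (append c v π) (i + 1)) ↔
      gtLetter (letter π i) (letter π (i + 1)) := by
  rw [letter_append_of_lt c v π h, letter_append_of_lt c v π (by omega : i < n), letter, letter,
    dif_pos h, dif_pos (by omega : i < n)]
  simp [gtLetter, Fin.succAbove_lt_succAbove_iff]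

/-- Effect of a new last letter on `fmaj`. The number `(n + 1) * c + (n - v)` counts the letters of
`Σ_{ℓ,n+1}` larger than the old last letter; a descent is created when it is below a threshold
depending on the new last letter. -/
lemma fmaj_append_append (c' : Fin ℓ) (v' : Fin (n + 2)) :
    fmaj (append c' v' (append c v π)) = c' + fmaj (append c v π) +
      if (n + 1) * c + (n - v) < (n + 1) * c' + (n + 1 - v') then (n + 1) * ℓ else 0 := by
  have key : gtLetter (letter (append c' v' (append c v π)) n)
      (letter (append c' v' (append c v π)) (n + 1)) ↔
        (n + 1) * (c : ℕ) + (n - v) < (n + 1) * c' + (n + 1 - v') := by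
    rw [letter_append_last, letter_append_of_lt _ _ _ (by omega : n < n + 1)]
    rw [show (⟨n, by omega⟩ : Fin (n + 1)) = Fin.last n from rfl, append_snd_last,
      append_fst_last]
    have h1 : (v' : ℕ) < (v'.succAbove v : ℕ) ↔ (v' : ℕ) ≤ v := by
      rw [← Fin.lt_def, Fin.lt_succAbove_iff_le_castSucc, Fin.le_def]; rfl
    simp only [gtLetter, h1]
    have hv := v.2
    have hv' := v'.2
    rcases lt_trichotomy (c : ℕ) c' with h | h | h
    · have := Nat.mul_le_mul_left (n + 1) (Nat.succ_le_of_lt h)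
      rw [Nat.succ_eq_add_one, Nat.mul_add] at this
      constructor
      · intro _; omega
      · intro _; exact Or.inl h
    · rw [h]; omega
    · have := Nat.mul_le_mul_left (n + 1) (Nat.succ_le_of_lt h)
      rw [Nat.succ_eq_add_one, Nat.mul_add] at this
      constructor
      · rintro (h | h) <;> omega
      · intro _; omega
  rw [fmaj, fmaj, col_append c' v', maj_eq, maj_eq]
  simp only [Nat.add_sub_cancel]
  rw [placeSum_succ, placeSum_congr fun i hi => gtLetter_append c' v' _ (by omega)]
  simp only [key]
  split_ifs <;> ring

end

section
variable {R : Type*} [CommSemiring R] (q : R)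

/-- The rank from the top is a bijection from the letters `(c, v)` to `{0, …, (n + 1) ℓ - 1}`. -/
lemma sum_rank (ℓ n : ℕ) (f : ℕ → R) :
    ∑ c : Fin ℓ, ∑ v : Fin (n + 1), f ((n + 1) * c + (n - v)) =
      ∑ r ∈ range ((n + 1) * ℓ), f r := by
  rw [Fin.sum_univ_eq_sum_range fun c => ∑ v : Fin (n + 1), f ((n + 1) * c + (n - v))]
  induction ℓ with
  | zero => simp
  | succ ℓ ih =>
    rw [sum_range_succ, ih, Nat.mul_succ, sum_range_add,
      Fin.sum_univ_eq_sum_range fun v => f ((n + 1) * ℓ + (n - v)),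
      ← sum_range_reflect fun x => f ((n + 1) * ℓ + x)]
    rfl

/-- Adding `N` to the exponents below `t` turns `0, …, N - 1` into `t, …, t + N - 1`. -/
lemma sum_rotate (N t : ℕ) (h : t ≤ N) :
    ∑ r ∈ range N, q ^ (r + if r < t then N else 0) = q ^ t * qint q N := by
  obtain ⟨k, rfl⟩ := Nat.exists_eq_add_of_le h
  rw [sum_range_add, qint, add_comm t k, sum_range_add, mul_add, mul_sum, mul_sum, add_comm]
  congr 1
  · exact sum_congr rfl fun i _ => by rw [if_neg (by omega), add_zero, pow_add]
  · refine sum_congr rfl fun i hi => ?_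
    rw [if_pos (mem_range.1 hi), ← pow_add]; congr 1; ring

/-- The generating function of `fmaj` over the colored permutations with a given last letter: the
exponent of the leading power is the rank of that letter from the top. -/
lemma sum_fmaj_append (ℓ n : ℕ) (c : Fin ℓ) (v : Fin (n + 1)) :
    ∑ π : CP ℓ n, q ^ fmaj (append c v π) =
      q ^ ((n + 1) * c + (n - v)) * ∏ j ∈ range n, qint q ((j + 1) * ℓ) := by
  induction n generalizing c with
  | zero =>
    have : ∀ π : CP ℓ 0, fmaj (append c v π) = c := by
      intro π
      rw [fmaj, col_append, maj_eq]
      simp [placeSum, col]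
    simp [this]
  | succ n ih =>
    rw [sum_append]
    have hstep : ∀ (c' : Fin ℓ) (v' : Fin (n + 1)) (π : CP ℓ n),
        q ^ fmaj (append c v (append c' v' π)) = q ^ fmaj (append c' v' π) *
          (q ^ (c : ℕ) * q ^ (if (n + 1) * (c' : ℕ) + (n - v') < (n + 1) * c + (n + 1 - v)
            then (n + 1) * ℓ else 0)) := by
      intro c' v' π
      rw [fmaj_append_append, pow_add, pow_add]; ring
    have hrank : ∀ (c' : Fin ℓ) (v' : Fin (n + 1)),
        q ^ ((n + 1) * (c' : ℕ) + (n - v')) * (∏ j ∈ range n, qint q ((j + 1) * ℓ)) *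
          (q ^ (c : ℕ) * q ^ (if (n + 1) * (c' : ℕ) + (n - v') < (n + 1) * c + (n + 1 - v)
            then (n + 1) * ℓ else 0)) =
        (fun r => q ^ (r + if r < (n + 1) * c + (n + 1 - v) then (n + 1) * ℓ else 0))
          ((n + 1) * (c' : ℕ) + (n - v')) *
            (q ^ (c : ℕ) * ∏ j ∈ range n, qint q ((j + 1) * ℓ)) := by
      intro c' v'
      beta_reduce
      rw [pow_add q ((n + 1) * (c' : ℕ) + (n - v'))]; ring
    simp_rw [hstep, ← sum_mul, ih, hrank, ← sum_mul]
    rw [sum_rank ℓ n fun r =>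
        q ^ (r + if r < (n + 1) * (c : ℕ) + (n + 1 - v) then (n + 1) * ℓ else 0),
      sum_rotate, prod_range_succ]
    · rw [show (n + 1 + 1) * (c : ℕ) + (n + 1 - v) = c + ((n + 1) * c + (n + 1 - v)) by ring,
        pow_add]
      ring
    · have := Nat.mul_le_mul_left (n + 1) (Nat.succ_le_of_lt c.2)
      rw [Nat.succ_eq_add_one, Nat.mul_add] at this
      omega

/-- The flag major index is Mahonian. -/
theorem sum_fmaj (ℓ n : ℕ) :
    ∑ σ : CP ℓ n, q ^ fmaj σ = ∏ j ∈ range n, qint q ((j + 1) * ℓ) := by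
  cases n with
  | zero =>
    have : ∀ π : CP ℓ 0, fmaj π = 0 := fun π => by
      rw [fmaj, maj_eq]
      simp [placeSum, col]
    simp [this]
  | succ n =>
    rw [sum_append]
    simp_rw [sum_fmaj_append, ← sum_mul]
    rw [sum_rank ℓ n fun r => q ^ r, prod_range_succ, mul_comm]
    rfl

end

end CP

/-! ### Inserting fixed points -/

namespace CP

section
variable {ℓ n m : ℕ}

/-- The colored permutation that acts on the places in `S` as `τ` does, after the increasing
relabelling of `Fin m` by `S`, and fixes the absolute value at every other place, with color `z`.
It is used with `z` the trivial color, so that these other places are fixed points. -/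
def insertFixed (S : Finset (Fin n)) (hS : #S = m) (z : Fin ℓ) (τ : CP ℓ m) : CP ℓ n :=
  (τ.1.extendDomain (S.orderIsoOfFin hS).toEquiv,
    fun i => if h : i ∈ S then τ.2 ((S.orderIsoOfFin hS).symm ⟨i, h⟩) else z)

variable (S : Finset (Fin n)) (hS : #S = m) (z : Fin ℓ) (τ : CP ℓ m)

lemma insertFixed_fst_emb (p : Fin m) :
    (insertFixed S hS z τ).1 (S.orderEmbOfFin hS p) = S.orderEmbOfFin hS (τ.1 p) :=
  Equiv.Perm.extendDomain_apply_image τ.1 (S.orderIsoOfFin hS).toEquiv p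

lemma insertFixed_snd_emb (p : Fin m) :
    (insertFixed S hS z τ).2 (S.orderEmbOfFin hS p) = τ.2 p := by
  have h : S.orderEmbOfFin hS p ∈ S := S.orderEmbOfFin_mem hS p
  simp only [insertFixed, dif_pos h]
  exact congrArg τ.2 ((S.orderIsoOfFin hS).symm_apply_apply p)

lemma insertFixed_fst_of_notMem {i : Fin n} (h : i ∉ S) : (insertFixed S hS z τ).1 i = i :=
  Equiv.Perm.extendDomain_apply_not_subtype τ.1 (S.orderIsoOfFin hS).toEquiv h

lemma insertFixed_snd_of_notMem {i : Fin n} (h : i ∉ S) : (insertFixed S hS z τ).2 i = z := by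
  simp [insertFixed, h]

lemma exists_emb_of_mem {i : Fin n} (h : i ∈ S) : ∃ p, S.orderEmbOfFin hS p = i := by
  have : i ∈ Set.range (S.orderEmbOfFin hS) := by rw [range_orderEmbOfFin]; exact h
  exact this

lemma fixSet_insertFixed (hz : (z : ℕ) = 0) (hτ : fixSet τ = ∅) :
    (fixSet (insertFixed S hS z τ))ᶜ = S := by
  ext i
  by_cases hi : i ∈ S
  · obtain ⟨p, rfl⟩ := exists_emb_of_mem S hS hi
    have := eq_empty_iff_forall_notMem.1 hτ p
    simp only [fixSet, mem_filter, mem_univ, true_and] at this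
    simp only [mem_compl, fixSet, mem_filter, mem_univ, true_and, insertFixed_fst_emb,
      insertFixed_snd_emb, EmbeddingLike.apply_eq_iff_eq, this, not_false_iff, hi]
  · simp [fixSet, insertFixed_fst_of_notMem S hS z τ hi, insertFixed_snd_of_notMem S hS z τ hi,
      hz, hi]

lemma col_insertFixed (hz : (z : ℕ) = 0) : col (insertFixed S hS z τ) = col τ := by
  have h : ∑ i ∈ S, ((insertFixed S hS z τ).2 i : ℕ) = col (insertFixed S hS z τ) :=
    sum_subset (subset_univ S) fun i _ hi => by
      rw [insertFixed_snd_of_notMem S hS z τ hi, hz]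
  rw [← h, sum_congr (map_orderEmbOfFin_univ S hS).symm fun _ _ => rfl, sum_map, col]
  exact sum_congr rfl fun p _ => congrArg Fin.val (insertFixed_snd_emb S hS z τ p)

end

section
variable {ℓ n : ℕ} (σ : CP ℓ n)

lemma image_compl_fixSet : ((fixSet σ)ᶜ).image σ.1 = (fixSet σ)ᶜ := by
  refine eq_of_subset_of_card_le (fun i hi => ?_) ?_
  · obtain ⟨j, hj, rfl⟩ := mem_image.1 hi
    simp only [fixSet, mem_compl, mem_filter, mem_univ, true_and] at *
    intro ⟨h, h'⟩
    have := σ.1.injective h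
    exact hj ⟨this, by rw [← this]; exact h'⟩
  · rw [card_image_of_injective _ σ.1.injective]

/-- The nonfixed places and their absolute values form the same set, so `Der σ` is the conjugate of
`σ` by the increasing enumeration of the nonfixed places. -/
lemma emb_Der (p : Fin (n - fix σ)) :
    ((fixSet σ)ᶜ).orderEmbOfFin (card_nonfix σ) ((Der σ).1 p) =
      σ.1 (((fixSet σ)ᶜ).orderEmbOfFin (card_nonfix σ) p) := by
  have key : ∀ (s t : Finset (Fin n)) (_ : s = t) (hs : #s = n - fix σ) (ht : #t = n - fix σ) x,
      s.orderEmbOfFin hs x = t.orderEmbOfFin ht x := by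
    rintro s t rfl hs ht x; rfl
  rw [← key _ _ (image_compl_fixSet σ) (card_vals σ)]
  exact congrArg Subtype.val ((((fixSet σ)ᶜ.image σ.1).orderIsoOfFin (card_vals σ)).apply_symm_apply
    (derMid σ (((fixSet σ)ᶜ).orderIsoOfFin (card_nonfix σ) p)))

lemma Der_snd (p : Fin (n - fix σ)) :
    (Der σ).2 p = σ.2 (((fixSet σ)ᶜ).orderEmbOfFin (card_nonfix σ) p) := rfl

lemma fixSet_Der : fixSet (Der σ) = ∅ := by
  refine eq_empty_iff_forall_notMem.2 fun p hp => ?_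
  have h := orderEmbOfFin_mem _ (card_nonfix σ) p
  simp only [fixSet, mem_compl, mem_filter, mem_univ, true_and] at hp h
  apply h
  have := emb_Der σ p
  rw [hp.1] at this
  exact ⟨this.symm, hp.2⟩

lemma insertFixed_Der (z : Fin ℓ) (hz : (z : ℕ) = 0) :
    insertFixed (fixSet σ)ᶜ (card_nonfix σ) z (Der σ) = σ := by
  have key : ∀ i, (insertFixed (fixSet σ)ᶜ (card_nonfix σ) z (Der σ)).1 i = σ.1 i ∧
      (insertFixed (fixSet σ)ᶜ (card_nonfix σ) z (Der σ)).2 i = σ.2 i := by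
    intro i
    by_cases hi : i ∈ (fixSet σ)ᶜ
    · obtain ⟨p, rfl⟩ := exists_emb_of_mem _ (card_nonfix σ) hi
      rw [insertFixed_fst_emb, insertFixed_snd_emb, emb_Der, Der_snd]
      exact ⟨rfl, rfl⟩
    · rw [insertFixed_fst_of_notMem _ _ _ _ hi, insertFixed_snd_of_notMem _ _ _ _ hi]
      simp only [fixSet, mem_compl, mem_filter, mem_univ, true_and, not_not] at hi
      exact ⟨hi.1.symm, Fin.ext (by rw [hz, hi.2])⟩
  exact Prod.ext (Equiv.ext fun i => (key i).1) (funext fun i => (key i).2)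

end

/-- A size `m`, a set of `m` places (the nonfixed ones), and a colored permutation of size `m`
without fixed points. -/
abbrev FixData (ℓ n : ℕ) :=
  Σ m : Fin (n + 1), {S : Finset (Fin n) // #S = m} × {τ : CP ℓ m // fixSet τ = ∅}

section
variable {ℓ n : ℕ}

/-- The nonfixed places and the derangement part of a colored permutation. -/
def toData (σ : CP ℓ n) : FixData ℓ n :=
  ⟨⟨n - fix σ, by omega⟩, ⟨(fixSet σ)ᶜ, card_nonfix σ⟩, ⟨Der σ, fixSet_Der σ⟩⟩

/-- The inverse of `toData` when `z` is the trivial color. -/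
def ofData (z : Fin ℓ) (x : FixData ℓ n) : CP ℓ n := insertFixed x.2.1.1 x.2.1.2 z x.2.2.1

lemma ofData_toData (z : Fin ℓ) (hz : (z : ℕ) = 0) (σ : CP ℓ n) : ofData z (toData σ) = σ :=
  insertFixed_Der σ z hz

lemma ofData_injective (z : Fin ℓ) (hz : (z : ℕ) = 0) :
    Function.Injective (ofData z : FixData ℓ n → CP ℓ n) := by
  rintro ⟨⟨m, hm⟩, ⟨S, hS⟩, ⟨τ, hτ⟩⟩ ⟨⟨m', hm'⟩, ⟨S', hS'⟩, ⟨τ', hτ'⟩⟩ h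
  simp only [ofData] at h hS hS'
  have hSS : S = S' := by
    rw [← fixSet_insertFixed S hS z τ hz hτ, h, fixSet_insertFixed S' hS' z τ' hz hτ']
  subst hSS
  have hmm : m = m' := hS.symm.trans hS'
  subst hmm
  have hττ : τ = τ' := by
    refine Prod.ext (Equiv.ext fun p => ?_) (funext fun p => ?_)
    · apply (S.orderEmbOfFin hS).injective
      rw [← insertFixed_fst_emb S hS z τ, h, insertFixed_fst_emb]
    · rw [← insertFixed_snd_emb S hS z τ, h, insertFixed_snd_emb]
  subst hττ
  rfl

lemma toData_ofData (z : Fin ℓ) (hz : (z : ℕ) = 0) (x : FixData ℓ n) :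
    toData (ofData z x) = x :=
  ofData_injective z hz (ofData_toData z hz _)

lemma fix_le (σ : CP ℓ n) : fix σ ≤ n := by
  simpa [fix] using card_le_univ (fixSet σ)

lemma maf_ofData (z : Fin ℓ) (hz : (z : ℕ) = 0) (x : FixData ℓ n) :
    maf (ofData z x) =
      maj x.2.2.1 + (∑ i ∈ (x.2.1.1)ᶜ, (i : ℕ) - (n - x.1).choose 2) := by
  have h : ∀ σ : CP ℓ n, maf σ = maj (toData σ).2.2.1 +
      (∑ i ∈ ((toData σ).2.1.1)ᶜ, (i : ℕ) - (n - (toData σ).1).choose 2) := by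
    intro σ
    have := fix_le σ
    simp only [toData, compl_compl, maf]
    rw [show n - (n - fix σ) = fix σ by omega]
  rw [h, toData_ofData z hz]

lemma sum_data {R : Type*} [AddCommMonoid R] (z : Fin ℓ) (hz : (z : ℕ) = 0) (g : CP ℓ n → R) :
    ∑ σ, g σ = ∑ m : Fin (n + 1), ∑ τ : {τ : CP ℓ m // fixSet τ = ∅},
      ∑ S : {S : Finset (Fin n) // #S = m}, g (insertFixed S.1 S.2 z τ.1) := by
  have hb : Function.Bijective (ofData z : FixData ℓ n → CP ℓ n) :=
    ⟨ofData_injective z hz, fun σ => ⟨toData σ, ofData_toData z hz σ⟩⟩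
  rw [← hb.sum_comp g, Fintype.sum_sigma]
  refine sum_congr rfl fun m _ => ?_
  rw [Fintype.sum_prod_type_right]
  rfl

end

/-! ### Descents next to fixed points -/

section
variable {ℓ n m : ℕ} (τ : CP ℓ m)

/-- The letter of `τ` at the 0-based place `i` is an excedance. This is false for `i ≥ m`, where
`letter` takes its default value `(0, 0)`. -/
def isExc (i : ℕ) : Prop := (letter τ i).1 = 0 ∧ i < (letter τ i).2

/-- The letter of `τ` at the 0-based place `i` is larger than the next one; beyond the end of the
word the default value `(0, 0)` of `letter` is compared. -/
def isDes (i : ℕ) : Prop := gtLetter (letter τ i) (letter τ (i + 1))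

lemma letter_of_lt {i : ℕ} (h : i < m) : letter τ i = ((τ.2 ⟨i, h⟩ : ℕ), (τ.1 ⟨i, h⟩ : ℕ)) :=
  dif_pos h

lemma letter_of_not_lt {i : ℕ} (h : ¬ i < m) : letter τ i = (0, 0) := dif_neg h

lemma letter_ne (hτ : fixSet τ = ∅) {i : ℕ} (h : i < m) (h0 : (letter τ i).1 = 0) :
    (letter τ i).2 ≠ i := by
  rw [letter_of_lt τ h] at *
  intro h1
  have := eq_empty_iff_forall_notMem.1 hτ ⟨i, h⟩
  simp only [fixSet, mem_filter, mem_univ, true_and] at this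
  exact this ⟨Fin.ext h1, h0⟩

lemma isDes_of_exc (hτ : fixSet τ = ∅) (i : ℕ) (h1 : isExc τ i) (h2 : ¬ isExc τ (i + 1)) :
    isDes τ i := by
  have hne := letter_ne τ hτ (i := i + 1)
  unfold isExc at *
  unfold isDes gtLetter
  by_cases h : i + 1 < m
  · have := hne h
    omega
  · have := letter_of_not_lt τ h
    rw [this]
    right; simp; omega

lemma not_isDes_of_exc (i : ℕ) (h1 : ¬ isExc τ i) (h2 : isExc τ (i + 1)) : ¬ isDes τ i := by
  unfold isExc at *
  unfold isDes gtLetter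
  omega

variable (S : Finset (Fin n)) (hS : #S = m) (z : Fin ℓ)

/-- The element number `p` of `S` has exactly `p` elements of `S` below it. -/
lemma card_filter_emb (p : Fin m) :
    #{j ∈ S.map Fin.valEmbedding | j < (S.orderEmbOfFin hS p : ℕ)} = p := by
  have : ({j ∈ S.map Fin.valEmbedding | j < (S.orderEmbOfFin hS p : ℕ)} : Finset ℕ) =
      (Iio p).map ((S.orderEmbOfFin hS).toEmbedding.trans Fin.valEmbedding) := by
    ext j
    simp only [mem_filter, mem_map, mem_Iio, Function.Embedding.trans_apply,
      RelEmbedding.coe_toEmbedding, Fin.valEmbedding_apply]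
    constructor
    · rintro ⟨⟨i, hi, rfl⟩, h⟩
      obtain ⟨r, rfl⟩ := exists_emb_of_mem S hS hi
      exact ⟨r, (S.orderEmbOfFin hS).lt_iff_lt.1 h, rfl⟩
    · rintro ⟨r, hr, rfl⟩
      exact ⟨⟨_, S.orderEmbOfFin_mem hS r, rfl⟩, (S.orderEmbOfFin hS).lt_iff_lt.2 hr⟩
  rw [this, card_map, Fin.card_Iio]

lemma letter_insertFixed_emb (p : Fin m) :
    letter (insertFixed S hS z τ) (S.orderEmbOfFin hS p : ℕ) =
      ((τ.2 p : ℕ), (S.orderEmbOfFin hS (τ.1 p) : ℕ)) := by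
  rw [letter_of_lt _ (S.orderEmbOfFin hS p).2, ← insertFixed_fst_emb S hS z,
    ← insertFixed_snd_emb S hS z]

lemma letter_insertFixed_of_notMem (hz : (z : ℕ) = 0) {i : ℕ} (hi : i < n)
    (h : (⟨i, hi⟩ : Fin n) ∉ S) : letter (insertFixed S hS z τ) i = (0, i) := by
  rw [letter_of_lt _ hi, insertFixed_fst_of_notMem _ _ _ _ h, insertFixed_snd_of_notMem _ _ _ _ h,
    hz]

/-- After inserting fixed points into a derangement `τ`, the descents are those of a shuffle of `τ`
with copies of a letter smaller than the excedances of `τ` and larger than its other letters. -/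
lemma gtLetter_insertFixed (hz : (z : ℕ) = 0) (hτ : fixSet τ = ∅) {i : ℕ} (hi : i + 1 < n) :
    gtLetter (letter (insertFixed S hS z τ) i) (letter (insertFixed S hS z τ) (i + 1)) ↔
      shufDes (isExc τ) (isDes τ) (S.map Fin.valEmbedding) i := by
  have hi' : i < n := by omega
  have mem : ∀ {j : ℕ} (hj : j < n), j ∈ S.map Fin.valEmbedding ↔ (⟨j, hj⟩ : Fin n) ∈ S := by
    intro j hj
    simp only [mem_map, Fin.valEmbedding_apply]
    exact ⟨fun ⟨a, ha, h⟩ => by subst h; exact ha, fun h => ⟨_, h, rfl⟩⟩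
  have lt_iff : ∀ p r : Fin m,
      (S.orderEmbOfFin hS p : ℕ) < (S.orderEmbOfFin hS r : ℕ) ↔ p < r :=
    fun p r => (S.orderEmbOfFin hS).lt_iff_lt
  have filter_succ : i ∉ S.map Fin.valEmbedding →
      ({j ∈ S.map Fin.valEmbedding | j < i} : Finset ℕ) =
        {j ∈ S.map Fin.valEmbedding | j < i + 1} := by
    intro h
    refine filter_congr fun j hj => ?_
    have : j ≠ i := fun h' => h (h' ▸ hj)
    omega
  unfold shufDes
  by_cases h1 : (⟨i, hi'⟩ : Fin n) ∈ S <;> by_cases h2 : (⟨i + 1, hi⟩ : Fin n) ∈ S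
  · rw [if_pos ((mem hi').2 h1), if_pos ((mem hi).2 h2)]
    obtain ⟨p, hp⟩ := exists_emb_of_mem S hS h1
    obtain ⟨r, hr⟩ := exists_emb_of_mem S hS h2
    have hp' : (S.orderEmbOfFin hS p : ℕ) = i := congrArg Fin.val hp
    have hr' : (S.orderEmbOfFin hS r : ℕ) = i + 1 := congrArg Fin.val hr
    have cp := card_filter_emb S hS p
    have cr := card_filter_emb S hS r
    have lp := letter_insertFixed_emb τ S hS z p
    have lr := letter_insertFixed_emb τ S hS z r
    rw [hp'] at cp lp
    rw [hr'] at cr lr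
    have hrp : (r : ℕ) = p + 1 := by
      rw [← cp, ← cr, ← card_insert_of_notMem (a := i) (by simp)]
      congr 1
      ext j
      have := (mem hi').2 h1
      simp only [mem_filter, mem_insert]
      grind
    rw [lp, lr, cp, isDes, ← hrp, letter_of_lt τ p.2, letter_of_lt τ r.2]
    simp only [gtLetter, lt_iff, Fin.eta, Fin.lt_def]
  · rw [if_pos ((mem hi').2 h1), if_neg (fun h => h2 ((mem hi).1 h))]
    obtain ⟨p, hp⟩ := exists_emb_of_mem S hS h1
    have hp' : (S.orderEmbOfFin hS p : ℕ) = i := congrArg Fin.val hp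
    have cp := card_filter_emb S hS p
    have lp := letter_insertFixed_emb τ S hS z p
    rw [hp'] at cp lp
    rw [lp, letter_insertFixed_of_notMem τ S hS z hz hi h2, cp, isExc, letter_of_lt τ p.2]
    -- The value at place `i` lies in `S`, so it exceeds the fixed point `i + 1` iff it exceeds `i`.
    have hne : (S.orderEmbOfFin hS (τ.1 p) : ℕ) ≠ i + 1 := fun h =>
      h2 (by
        have := S.orderEmbOfFin_mem hS (τ.1 p)
        rwa [show S.orderEmbOfFin hS (τ.1 p) = ⟨i + 1, hi⟩ from Fin.ext h] at this)
    have := lt_iff p (τ.1 p)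
    rw [hp', Fin.lt_def] at this
    simp only [gtLetter, Fin.eta]
    omega
  · rw [if_neg (fun h => h1 ((mem hi').1 h)), if_pos ((mem hi).2 h2),
      filter_succ (fun h => h1 ((mem hi').1 h))]
    obtain ⟨r, hr⟩ := exists_emb_of_mem S hS h2
    have hr' : (S.orderEmbOfFin hS r : ℕ) = i + 1 := congrArg Fin.val hr
    have cr := card_filter_emb S hS r
    have lr := letter_insertFixed_emb τ S hS z r
    have hd := letter_ne τ hτ r.2
    rw [hr'] at cr lr
    rw [lr, letter_insertFixed_of_notMem τ S hS z hz hi' h1, cr, isExc]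
    rw [letter_of_lt τ r.2] at *
    have hne : (S.orderEmbOfFin hS (τ.1 r) : ℕ) ≠ i := fun h =>
      h1 (by
        have := S.orderEmbOfFin_mem hS (τ.1 r)
        rwa [show S.orderEmbOfFin hS (τ.1 r) = ⟨i, hi'⟩ from Fin.ext h] at this)
    have := lt_iff (τ.1 r) r
    rw [hr', Fin.lt_def] at this
    simp only [gtLetter, Fin.eta] at *
    omega
  · rw [if_neg (fun h => h1 ((mem hi').1 h)), if_neg (fun h => h2 ((mem hi).1 h)),
      letter_insertFixed_of_notMem τ S hS z hz hi h2,
      letter_insertFixed_of_notMem τ S hS z hz hi' h1]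
    simp [gtLetter]

lemma maj_insertFixed (hz : (z : ℕ) = 0) (hτ : fixSet τ = ∅) :
    maj (insertFixed S hS z τ) =
      placeSum (shufDes (isExc τ) (isDes τ) (S.map Fin.valEmbedding)) (n - 1) := by
  rw [maj_eq]
  exact placeSum_congr fun i hi => gtLetter_insertFixed τ S hS z hz hτ (by omega)

end

/-! ### Comparison of `fmaf` and `fmaj` -/

lemma sum_subtype_card {R : Type*} [AddCommMonoid R] (n m : ℕ) (g : Finset ℕ → R) :
    ∑ S : {S : Finset (Fin n) // #S = m}, g (S.1.map Fin.valEmbedding) =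
      ∑ S ∈ powersetCard m (range n), g S := by
  have hr : range n = (univ : Finset (Fin n)).map Fin.valEmbedding := by
    ext i; simp
  rw [hr, powersetCard_map, sum_map]
  refine (sum_subtype _ (fun S => ?_) fun S : Finset (Fin n) => g (S.map Fin.valEmbedding)).symm
  simp

/-- For a fixed derangement part `τ`, `maj` and `maf` are equidistributed over the possible sets of
nonfixed places; the exponent on the right is `maf`, by `maf_ofData`. -/
lemma sum_fiber {R : Type*} [CommSemiring R] (Q : R) {ℓ n m : ℕ} (z : Fin ℓ) (hz : (z : ℕ) = 0)
    (τ : CP ℓ m) (hτ : fixSet τ = ∅) :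
    ∑ S : {S : Finset (Fin n) // #S = m}, Q ^ maj (insertFixed S.1 S.2 z τ) =
      ∑ S : {S : Finset (Fin n) // #S = m},
        Q ^ (maj τ + (∑ i ∈ (S.1)ᶜ, (i : ℕ) - (n - m).choose 2)) := by
  have h1 := sum_subtype_card n m
    fun S => Q ^ placeSum (shufDes (isExc τ) (isDes τ) S) (n - 1)
  have h2 := sum_subtype_card n m
    fun S => Q ^ (∑ i ∈ range n \ S, i - (n - m).choose 2)
  rw [shuffle Q _ _ (isDes_of_exc τ hτ) (not_isDes_of_exc τ)] at h1
  rw [sum_inv] at h2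
  simp_rw [maj_insertFixed τ _ _ z hz hτ, pow_add, ← mul_sum]
  rw [h1, ← h2, maj_eq τ]
  unfold isDes
  congr 1
  refine sum_congr rfl fun S _ => ?_
  congr 2
  have : range n \ S.1.map Fin.valEmbedding = (S.1)ᶜ.map Fin.valEmbedding := by
    ext i
    simp only [mem_sdiff, mem_range, mem_map, mem_compl, Fin.valEmbedding_apply]
    constructor
    · rintro ⟨h, h'⟩
      exact ⟨⟨i, h⟩, fun h'' => h' ⟨_, h'', rfl⟩, rfl⟩
    · rintro ⟨a, ha, rfl⟩
      exact ⟨a.2, fun ⟨b, hb, h⟩ => ha (Fin.ext h ▸ hb)⟩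
  rw [this, sum_map]
  rfl

lemma sum_fmaf_eq_sum_fmaj {R : Type*} [CommSemiring R] (q : R) (ℓ n : ℕ) (hℓ : 1 ≤ ℓ) :
    ∑ σ : CP ℓ n, q ^ fmaf σ = ∑ σ : CP ℓ n, q ^ fmaj σ := by
  let z : Fin ℓ := ⟨0, hℓ⟩
  have hz : (z : ℕ) = 0 := rfl
  rw [sum_data z hz, sum_data z hz]
  refine sum_congr rfl fun m _ => sum_congr rfl fun τ _ => ?_
  simp_rw [fmaf, fmaj, col_insertFixed _ _ z _ hz, pow_add, pow_mul, ← sum_mul]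
  rw [sum_fiber (q ^ ℓ) z hz τ.1 τ.2]
  congr 1
  exact sum_congr rfl fun S _ => congrArg _ (maf_ofData z hz ⟨m, S, τ⟩)

end CP

open Polynomial in
/-- `fmaf` is Mahonian on `G_{ℓ,n}`:
`Σ_{σ ∈ G_{ℓ,n}} q^{fmaf σ} = [ℓ]_q [2ℓ]_q ⋯ [nℓ]_q`. -/
theorem fmaf_is_mahonian (ℓ n : ℕ) (hℓ : 1 ≤ ℓ) :
    (∑ σ : CP ℓ n, (X : Polynomial ℤ) ^ CP.fmaf σ) =
      ∏ j ∈ Icc 1 n, qint (X : Polynomial ℤ) (j * ℓ) := by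
  rw [CP.sum_fmaf_eq_sum_fmaj _ ℓ n hℓ, CP.sum_fmaj, range_eq_Ico,
    prod_Ico_add' (fun j => qint (X : Polynomial ℤ) (j * ℓ)) 0 n 1]
  rfl
end
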